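/- Let u : ℕ → {1,2,3} be a (right-sided) non-degenerate 3iet word with parameters ε, l, c, i.e., u(n) = 1, 2 or 3 according as Tⁿ(0) ∈ [c, c+l−1+ε), [c+l−1+ε, c+ε) or [c+ε, c+l), where ε ∈ (0,1) is irrational, max(ε,1−ε) < l < 1, c ≤ 0 < c+l and l ∉ ℤ[ε]. Let σ₀₁ be the morphism from words over {1,2,3} to words over {0,1} determined by 1 ↦ 0, 2 ↦ 01, 3 ↦ 1, and σ₁₀ the morphism determined by 1 ↦ 0, 2 ↦ 10, 3 ↦ 1, each applied letterwise and extended to infinite words by concatenation. Then u is a fixed point of some primitive substitution over {1,2,3} if and only if both infinite words σ₀₁(u) and σ₁₀(u) are fixed points of substitutions over {0,1} different from the identity. -/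

import Mathlib

/-- The set `ℤ[ε] = {a + bε : a, b ∈ ℤ}`. -/
def Zbr (ε : ℝ) : Set ℝ := {x | ∃ a b : ℤ, x = (a : ℝ) + (b : ℝ) * ε}

/-- The exchange of three intervals on `[c, c+l)` with parameters `ε, l, c`. -/
noncomputable def T3 (ε l c : ℝ) (x : ℝ) : ℝ :=
  if x < c + l - 1 + ε then x + 1 - ε
  else if x < c + ε then x + 1 - 2 * ε
  else x - ε

/-- The letter (1, 2 or 3, coded as 0, 1, 2 in `Fin 3`) coding the position of `x`. -/
noncomputable def letter3 (ε l c : ℝ) (x : ℝ) : Fin 3 :=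
  if x < c + l - 1 + ε then 0 else if x < c + ε then 1 else 2

/-- The right-sided 3iet word with parameters `ε, l, c`, coding the orbit of `0`. -/
noncomputable def threeIetWordN (ε l c : ℝ) (n : ℕ) : Fin 3 :=
  letter3 ε l c ((T3 ε l c)^[n] 0)

/-- The extension of a substitution `φ` to finite words, by concatenation. -/
def substWord {A : Type*} (φ : A → List A) (w : List A) : List A := w.flatMap φ

/-- A substitution is primitive if some power of it maps every letter to a word
containing all letters. -/
def IsPrimitiveSubst {A : Type*} (φ : A → List A) : Prop :=
  ∃ n : ℕ, 1 ≤ n ∧ ∀ a b : A, b ∈ (substWord φ)^[n] [a]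

/-- A right-infinite word `s : ℕ → A` is a fixed point of the substitution `φ`. -/
def IsFixedPointSubst {A : Type*} (φ : A → List A) (s : ℕ → A) : Prop :=
  ∃ k : ℕ → ℕ, StrictMono k ∧ k 0 = 0 ∧
    (∀ n, k (n + 1) = k n + (φ (s n)).length) ∧
    ∀ n, ∀ i, (h : i < (φ (s n)).length) → s (k n + i) = (φ (s n)).get ⟨i, h⟩

/-- `v : ℕ → B` is the image of the right-infinite word `u : ℕ → A` under the
letter-to-word morphism `σ`, i.e. `v = σ(u(0))σ(u(1))σ(u(2))⋯`. -/
def IsConcatImage {A B : Type*} (σ : A → List B) (u : ℕ → A) (v : ℕ → B) : Prop :=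
  ∃ k : ℕ → ℕ, k 0 = 0 ∧ (∀ n, k (n + 1) = k n + (σ (u n)).length) ∧
    ∀ n, ∀ i, (h : i < (σ (u n)).length) → v (k n + i) = (σ (u n)).get ⟨i, h⟩

/-- The morphism `σ₀₁ : 1 ↦ 0, 2 ↦ 01, 3 ↦ 1` (letters 1,2,3 coded as 0,1,2). -/
def sigma01 : Fin 3 → List (Fin 2) := ![[0], [0, 1], [1]]

/-- The morphism `σ₁₀ : 1 ↦ 0, 2 ↦ 10, 3 ↦ 1` (letters 1,2,3 coded as 0,1,2). -/
def sigma10 : Fin 3 → List (Fin 2) := ![[0], [1, 0], [1]]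

section Helpers

open Topology Filter


/-- Real value of a lattice point. -/
def vl (ε : ℝ) (z : ℤ × ℤ) : ℝ := z.1 * (1 - ε) - z.2 * ε

/-- A linear height on the lattice. -/
def gg (g0 g1 : ℝ) (z : ℤ × ℤ) : ℝ := z.1 * g0 + z.2 * g1

/-- Displacement of the interval exchange, as a lattice vector. -/
noncomputable def dd (ε l c x : ℝ) : ℤ × ℤ :=
  if x < c + l - 1 + ε then (1, 0) else if x < c + ε then (1, 1) else (0, 1)

/-- Lattice orbit of zero. -/
noncomputable def orb (ε l c : ℝ) : ℕ → ℤ × ℤ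
  | 0 => 0
  | n + 1 => orb ε l c n + dd ε l c (vl ε (orb ε l c n))

/-- Admissible parameters (the degenerate case `l = 1` is allowed). -/
structure Par (ε l c : ℝ) : Prop where
  irr : Irrational ε
  e0 : 0 < ε
  e1 : ε < 1
  le : ε < l
  le' : 1 - ε < l
  l1 : l ≤ 1
  c0 : c ≤ 0
  cl : 0 < c + l

section basic

lemma vl_add (ε : ℝ) (z w : ℤ × ℤ) : vl ε (z + w) = vl ε z + vl ε w := by
  simp [vl]; ring
lemma vl_sub (ε : ℝ) (z w : ℤ × ℤ) : vl ε (z - w) = vl ε z - vl ε w := by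
  simp [vl]; ring
lemma vl_neg (ε : ℝ) (z : ℤ × ℤ) : vl ε (-z) = - vl ε z := by
  simp [vl]; ring
lemma vl_zero (ε : ℝ) : vl ε 0 = 0 := by simp [vl]
lemma vl_nsmul (ε : ℝ) (n : ℕ) (z : ℤ × ℤ) : vl ε (n • z) = n * vl ε z := by
  simp [vl]; ring
lemma gg_add (a b : ℝ) (z w : ℤ × ℤ) : gg a b (z + w) = gg a b z + gg a b w := by
  simp [gg]; ring
lemma gg_sub (a b : ℝ) (z w : ℤ × ℤ) : gg a b (z - w) = gg a b z - gg a b w := by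
  simp [gg]; ring
lemma gg_neg (a b : ℝ) (z : ℤ × ℤ) : gg a b (-z) = - gg a b z := by
  simp [gg]; ring
lemma gg_zero (a b : ℝ) : gg a b 0 = 0 := by simp [gg]
lemma gg_nsmul (a b : ℝ) (n : ℕ) (z : ℤ × ℤ) : gg a b (n • z) = n * gg a b z := by
  simp [gg]; ring

lemma irr_lin {ε : ℝ} (h : Irrational ε) {a b : ℤ} (hab : (a : ℝ) + b * ε = 0) :
    a = 0 ∧ b = 0 := by
  have hb : b = 0 := by
    by_contra hb
    have := (h.intCast_mul hb).intCast_add a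
    rw [hab] at this
    exact this.ne_zero rfl
  subst hb
  simp at hab
  exact ⟨hab, rfl⟩

lemma vl_inj {ε : ℝ} (h : Irrational ε) {z w : ℤ × ℤ} (hzw : vl ε z = vl ε w) : z = w := by
  have h1 : ((z.1 - w.1 : ℤ) : ℝ) + ((w.1 + w.2 - z.1 - z.2 : ℤ) : ℝ) * ε = 0 := by
    push_cast; unfold vl at hzw; linarith
  obtain ⟨h2, h3⟩ := irr_lin h h1
  ext <;> omega

lemma dd_mem {ε l c : ℝ} (hp : Par ε l c) {x : ℝ} (h1 : c ≤ x) (h2 : x < c + l) :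
    c ≤ x + vl ε (dd ε l c x) ∧ x + vl ε (dd ε l c x) < c + l := by
  obtain ⟨_, _, _, _, _, _, _, _⟩ := hp
  unfold dd vl
  split_ifs <;> simp <;> constructor <;> linarith

lemma orb_mem {ε l c : ℝ} (hp : Par ε l c) (n : ℕ) :
    c ≤ vl ε (orb ε l c n) ∧ vl ε (orb ε l c n) < c + l := by
  induction n with
  | zero => simpa [orb, vl_zero] using ⟨hp.c0, hp.cl⟩
  | succ n ih => rw [orb, vl_add]; exact dd_mem hp ih.1 ih.2

lemma gap {ε l c g0 g1 : ℝ} (hp : Par ε l c) (hg0 : 0 < g0) (hg1 : 0 < g1) {y : ℝ} {z : ℤ × ℤ}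
    (h1 : c ≤ y) (h2 : y < c + l) (h3 : c ≤ y + vl ε z) (h4 : y + vl ε z < c + l)
    (h5 : 0 ≤ gg g0 g1 z) (h6 : gg g0 g1 z < gg g0 g1 (dd ε l c y)) : z = 0 := by
  obtain ⟨_, _, _, _, _, _, _, _⟩ := hp
  obtain ⟨i, j⟩ := z
  simp only [vl, gg] at *
  by_contra hne
  have key : (1 ≤ i ∧ j ≤ 0 ∨ i ≤ 0 ∧ 1 ≤ j) ∧ (gg g0 g1 (dd ε l c y) ≤ g0 → 1 ≤ i → j ≤ -1) ∧
      (gg g0 g1 (dd ε l c y) ≤ g1 → 1 ≤ j → i ≤ -1) := by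
    have hd : gg g0 g1 (dd ε l c y) ≤ g0 + g1 := by
      unfold dd gg; split_ifs <;> simp <;> linarith
    have hd' : (i:ℝ) * g0 + j * g1 < gg g0 g1 (dd ε l c y) := h6
    refine ⟨?_, ?_, ?_⟩
    · rcases lt_trichotomy i 0 with hi | hi | hi
      · right
        refine ⟨hi.le, ?_⟩
        by_contra hj
        have a1 : (i:ℝ) ≤ -1 := by exact_mod_cast (by omega : i ≤ -1)
        have a2 : (j:ℝ) ≤ 0 := by exact_mod_cast (by omega : j ≤ 0)
        nlinarith
      · right
        refine ⟨hi.le, ?_⟩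
        by_contra hj
        have hj0 : j ≠ 0 := by rintro rfl; subst hi; exact hne rfl
        have a2 : (j:ℝ) ≤ -1 := by exact_mod_cast (by omega : j ≤ -1)
        subst hi
        simp at h5
        nlinarith
      · left
        refine ⟨hi, ?_⟩
        by_contra hj
        have a1 : (1:ℝ) ≤ i := by exact_mod_cast (by omega : 1 ≤ i)
        have a2 : (1:ℝ) ≤ j := by exact_mod_cast (by omega : 1 ≤ j)
        nlinarith
    · intro h hi
      by_contra hj
      have a1 : (1:ℝ) ≤ i := by exact_mod_cast (by omega : 1 ≤ i)
      have a2 : (0:ℝ) ≤ j := by exact_mod_cast (by omega : 0 ≤ j)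
      nlinarith
    · intro h hi
      by_contra hj
      have a1 : (1:ℝ) ≤ j := by exact_mod_cast (by omega : 1 ≤ j)
      have a2 : (0:ℝ) ≤ i := by exact_mod_cast (by omega : 0 ≤ i)
      nlinarith
  obtain ⟨k1, k2, k3⟩ := key
  rcases k1 with ⟨hi, hj⟩ | ⟨hi, hj⟩
  · have a1 : (1:ℝ) ≤ i := by exact_mod_cast hi
    have a2 : (j:ℝ) ≤ 0 := by exact_mod_cast hj
    by_cases hy : y < c + l - 1 + ε
    · have := k2 (by simp [dd, hy, gg]) hi
      have a3 : (j:ℝ) ≤ -1 := by exact_mod_cast this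
      nlinarith
    · nlinarith
  · have a1 : (1:ℝ) ≤ j := by exact_mod_cast hj
    have a2 : (i:ℝ) ≤ 0 := by exact_mod_cast hi
    by_cases hy : y < c + ε
    · nlinarith
    · have := k3 (by rw [dd, if_neg (by linarith), if_neg hy]; simp [gg]) hj
      have a3 : (i:ℝ) ≤ -1 := by exact_mod_cast this
      nlinarith

lemma gg_dd_ge {g0 g1 : ℝ} (ε l c : ℝ) (hg0 : 0 < g0) (hg1 : 0 < g1) (y : ℝ) :
    min g0 g1 ≤ gg g0 g1 (dd ε l c y) := by
  unfold dd gg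
  split_ifs <;> simp
  right; linarith

lemma gg_dd_pos {g0 g1 : ℝ} (ε l c : ℝ) (hg0 : 0 < g0) (hg1 : 0 < g1) (y : ℝ) :
    0 < gg g0 g1 (dd ε l c y) := lt_of_lt_of_le (lt_min hg0 hg1) (gg_dd_ge ε l c hg0 hg1 y)

lemma gg_orb_ge {g0 g1 : ℝ} (ε l c : ℝ) (hg0 : 0 < g0) (hg1 : 0 < g1) (n : ℕ) :
    n * min g0 g1 ≤ gg g0 g1 (orb ε l c n) := by
  induction n with
  | zero => simp [orb, gg_zero]
  | succ n ih =>
    rw [orb, gg_add]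
    have := gg_dd_ge ε l c hg0 hg1 (vl ε (orb ε l c n))
    push_cast; linarith

lemma gg_orb_mono {g0 g1 : ℝ} (ε l c : ℝ) (hg0 : 0 < g0) (hg1 : 0 < g1) :
    StrictMono fun n => gg g0 g1 (orb ε l c n) := by
  refine strictMono_nat_of_lt_succ fun n => ?_
  simp only [orb, gg_add]
  linarith [gg_dd_pos ε l c hg0 hg1 (vl ε (orb ε l c n))]

/-- every lattice point of nonnegative height over the interval lies on the orbit -/
lemma orb_surj {ε l c g0 g1 : ℝ} (hp : Par ε l c) (hg0 : 0 < g0) (hg1 : 0 < g1) {z : ℤ × ℤ}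
    (h1 : c ≤ vl ε z) (h2 : vl ε z < c + l) (h3 : 0 ≤ gg g0 g1 z) : ∃ n, orb ε l c n = z := by
  have hm : 0 < min g0 g1 := lt_min hg0 hg1
  obtain ⟨N, hN⟩ := exists_nat_gt (gg g0 g1 z / min g0 g1)
  have hN' : gg g0 g1 z < gg g0 g1 (orb ε l c N) := by
    rw [div_lt_iff₀ hm] at hN
    linarith [gg_orb_ge ε l c hg0 hg1 N]
  classical
  have hex : ∃ N, gg g0 g1 z < gg g0 g1 (orb ε l c N) := ⟨N, hN'⟩
  have hf := Nat.find_spec hex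
  have hmin := fun m => Nat.find_min hex (m := m)
  generalize Nat.find hex = K at *
  cases K with
  | zero => simp [orb, gg_zero] at hf; linarith
  | succ n =>
    have h4 := hmin n (by omega)
    push Not at h4
    refine ⟨n, ?_⟩
    have hn := orb_mem hp n
    have := gap (z := z - orb ε l c n) hp hg0 hg1 hn.1 hn.2 (by rw [vl_sub]; linarith)
      (by rw [vl_sub]; linarith) (by rw [gg_sub]; linarith)
      (by rw [gg_sub]; rw [orb, gg_add] at hf; linarith)
    exact (sub_eq_zero.1 this).symm

lemma tiny {ε : ℝ} (h : Irrational ε) {δ : ℝ} (hδ : 0 < δ) : ∃ z : ℤ × ℤ, 0 < vl ε z ∧ vl ε z < δ := by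
  have hd : Dense (AddSubgroup.closure {1, ε} : Set ℝ) := by
    rw [dense_addSubgroupClosure_pair_iff]
    simpa using h.inv
  obtain ⟨x, hx, hx'⟩ := hd.exists_between hδ
  rw [SetLike.mem_coe, AddSubgroup.mem_closure_pair] at hx
  obtain ⟨a, b, rfl⟩ := hx
  refine ⟨(a, -(a + b)), ?_⟩
  have : vl ε (a, -(a + b)) = a • 1 + b • ε := by simp [vl]; ring
  rw [this]; exact hx'

lemma dense_pos {ε g0 g1 : ℝ} (h : Irrational ε) (h0 : 0 < ε) (h1 : ε < 1) (hg0 : 0 < g0)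
    (hg1 : 0 < g1) {p q : ℝ} (hpq : p < q) (K : ℝ) :
    ∃ z : ℤ × ℤ, p < vl ε z ∧ vl ε z < q ∧ K < gg g0 g1 z := by
  obtain ⟨w, hw0, hw1⟩ := tiny h (sub_pos.2 hpq)
  -- generic stepping lemma
  have step : ∀ p q η x : ℝ, 0 < η → η < q - p → x < p → ∃ n : ℕ, p < x + n * η ∧ x + n * η < q := by
    intro p q η x hη hη' hx
    refine ⟨⌊(p - x) / η⌋₊ + 1, ?_, ?_⟩
    · have := Nat.lt_floor_add_one ((p - x) / η)
      rw [div_lt_iff₀ hη] at this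
      push_cast; linarith
    · have := Nat.floor_le (a := (p - x) / η) (by apply div_nonneg <;> linarith)
      rw [le_div_iff₀ hη] at this
      push_cast; linarith
  by_cases hgw : 0 ≤ gg g0 g1 w
  · obtain ⟨m, hm⟩ := exists_nat_gt (max (-p / ε) (K / g1))
    have hm1 := lt_of_le_of_lt (le_max_left _ _) hm
    have hm2 := lt_of_le_of_lt (le_max_right _ _) hm
    rw [div_lt_iff₀ h0] at hm1
    rw [div_lt_iff₀ hg1] at hm2
    obtain ⟨n, hn1, hn2⟩ := step p q (vl ε w) (-(m * ε)) hw0 hw1 (by linarith)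
    refine ⟨(0, (m : ℤ)) + n • w, ?_, ?_, ?_⟩
    · rw [vl_add, vl_nsmul]; simp [vl] at *; linarith
    · rw [vl_add, vl_nsmul]; simp [vl] at *; linarith
    · rw [gg_add, gg_nsmul]
      have : (0:ℝ) ≤ n * gg g0 g1 w := by positivity
      have : gg g0 g1 (0, (m:ℤ)) = m * g1 := by simp [gg]
      linarith
  · obtain ⟨m, hm⟩ := exists_nat_gt (max (q / (1 - ε)) (K / g0))
    have hm1 := lt_of_le_of_lt (le_max_left _ _) hm
    have hm2 := lt_of_le_of_lt (le_max_right _ _) hm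
    rw [div_lt_iff₀ (by linarith)] at hm1
    rw [div_lt_iff₀ hg0] at hm2
    obtain ⟨n, hn1, hn2⟩ := step (-q) (-p) (vl ε w) (-(m * (1 - ε))) hw0 (by linarith) (by linarith)
    refine ⟨((m : ℤ), 0) + n • (-w), ?_, ?_, ?_⟩
    · rw [vl_add, vl_nsmul, vl_neg]; simp [vl] at *; linarith
    · rw [vl_add, vl_nsmul, vl_neg]; simp [vl] at *; linarith
    · rw [gg_add, gg_nsmul, gg_neg]
      have : (0:ℝ) ≤ n * (- gg g0 g1 w) := by
        apply mul_nonneg (by positivity); linarith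
      have : gg g0 g1 ((m:ℤ), 0) = m * g0 := by simp [gg]
      linarith

lemma orb_dense {ε l c : ℝ} (hp : Par ε l c) {p q : ℝ} (hpq : p < q) (h1 : c ≤ p) (h2 : q ≤ c + l) :
    ∃ n, p < vl ε (orb ε l c n) ∧ vl ε (orb ε l c n) < q := by
  obtain ⟨z, hz1, hz2, hz3⟩ := dense_pos hp.irr hp.e0 hp.e1 one_pos one_pos hpq 0
  obtain ⟨n, hn⟩ := orb_surj hp one_pos one_pos (by linarith) (by linarith) hz3.le
  exact ⟨n, by rw [hn]; exact ⟨hz1, hz2⟩⟩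

end basic


/-- Scaling data: an integer matrix acting by `lam` on values and by `Lam` on heights. -/
structure Adm (ε lam Lam g0 g1 : ℝ) (M : ℤ × ℤ →+ ℤ × ℤ) : Prop where
  hv : ∀ z, vl ε (M z) = lam * vl ε z
  hg : ∀ z, gg g0 g1 (M z) = Lam * gg g0 g1 z
  l0 : 0 < lam
  l1 : lam < 1
  L0 : 0 < Lam
  p0 : 0 < g0
  p1 : 0 < g1
  inj : ∀ z, gg g0 g1 z = 0 → z = 0

/-- The word `s` is self-similar along `k`. -/
def SS {A : Type*} (s : ℕ → A) (k : ℕ → ℕ) : Prop :=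
  k 0 = 0 ∧ StrictMono k ∧ ∀ n m, s n = s m → k (n + 1) - k n = k (m + 1) - k m ∧
    ∀ i, i < k (n + 1) - k n → s (k n + i) = s (k m + i)

/-- The sequence of displacements. -/
noncomputable def ds (ε l c : ℝ) (n : ℕ) : ℤ × ℤ := dd ε l c (vl ε (orb ε l c n))

/-- The boundary value `A` is never crossed inside a continuity interval. -/
def Cnd (ε l c lam Lam g0 g1 A : ℝ) : Prop :=
  ∀ (y : ℝ) (z : ℤ × ℤ), c < y → y < c + l → y ≠ c + l - 1 + ε → y ≠ c + ε →
    0 < gg g0 g1 z → gg g0 g1 z < Lam * gg g0 g1 (dd ε l c y) → lam * y + vl ε z ≠ A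

lemma orb_succ (ε l c : ℝ) (n : ℕ) : orb ε l c (n + 1) = orb ε l c n + ds ε l c n := rfl

lemma SS_block {ε l c : ℝ} {k : ℕ → ℕ} (h : SS (ds ε l c) k) {n m : ℕ} (hnm : ds ε l c n = ds ε l c m)
    (i : ℕ) (hi : i ≤ k (n + 1) - k n) :
    orb ε l c (k n + i) - orb ε l c (k n) = orb ε l c (k m + i) - orb ε l c (k m) := by
  induction i with
  | zero => simp
  | succ i ih =>
    have := (h.2.2 n m hnm).2 i (by omega)
    have ih := ih (by omega)
    rw [← add_assoc, ← add_assoc, orb_succ, orb_succ, this, add_sub_right_comm, ih]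
    abel

lemma dd_nhds {ε l c y : ℝ} (h3 : y ≠ c + l - 1 + ε)
    (h4 : y ≠ c + ε) : ∀ᶠ x in 𝓝 y, dd ε l c x = dd ε l c y := by
  unfold dd
  rcases lt_or_gt_of_ne h3 with h3 | h3 <;> rcases lt_or_gt_of_ne h4 with h4 | h4
  · filter_upwards [eventually_lt_nhds h3] with x hx
    simp [hx, h3]
  · filter_upwards [eventually_lt_nhds h3] with x hx
    simp [hx, h3]
  · filter_upwards [eventually_gt_nhds h3, eventually_lt_nhds h4] with x hx hx'
    rw [if_neg hx.not_gt, if_neg h3.not_gt, if_pos hx', if_pos h4]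
  · filter_upwards [eventually_gt_nhds h3, eventually_gt_nhds h4] with x hx hx'
    rw [if_neg (by linarith), if_neg (by linarith), if_neg (by linarith), if_neg (by linarith)]

lemma extract_aux {ε l c lam Lam g0 g1 : ℝ} {M : ℤ × ℤ →+ ℤ × ℤ} (hp : Par ε l c)
    (ha : Adm ε lam Lam g0 g1 M) {k : ℕ → ℕ} (hk : SS (ds ε l c) k)
    (hM : ∀ n, orb ε l c (k n) = M (orb ε l c n)) {n m : ℕ} {z : ℤ × ℤ}
    (hnm : ds ε l c m = ds ε l c n) (hz0 : 0 < gg g0 g1 z)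
    (hz1 : gg g0 g1 z < Lam * gg g0 g1 (ds ε l c m))
    (h1 : c ≤ lam * vl ε (orb ε l c m) + vl ε z) (h2 : lam * vl ε (orb ε l c m) + vl ε z < c + l) :
    c ≤ lam * vl ε (orb ε l c n) + vl ε z ∧ lam * vl ε (orb ε l c n) + vl ε z < c + l := by
  have hmono := gg_orb_mono ε l c ha.p0 ha.p1
  have h0 : 0 ≤ gg g0 g1 (orb ε l c (k m)) := by
    have := hmono.monotone (Nat.zero_le (k m))
    simpa [orb, gg_zero] using this
  obtain ⟨j, hj⟩ := orb_surj (z := orb ε l c (k m) + z) hp ha.p0 ha.p1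
    (by rw [vl_add, hM, ha.hv]; exact h1) (by rw [vl_add, hM, ha.hv]; exact h2)
    (by rw [gg_add]; linarith)
  have hj1 : k m < j := by
    apply hmono.lt_iff_lt.1
    simp only [hj, gg_add]; linarith
  have hj2 : j < k (m + 1) := by
    apply hmono.lt_iff_lt.1
    simp only [hj, gg_add, hM, orb_succ, map_add]
    rw [ha.hg (ds ε l c m)]; linarith
  obtain ⟨i, rfl⟩ := Nat.exists_eq_add_of_lt hj1
  have := SS_block hk hnm (i + 1) (by omega)
  rw [← add_assoc, hj, add_sub_cancel_left] at this
  have h3 : orb ε l c (k n + (i + 1)) = M (orb ε l c n) + z := by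
    rw [this, ← hM]; abel_nf
  have h4 := orb_mem hp (k n + (i + 1))
  rw [h3, vl_add, ha.hv] at h4
  exact h4

lemma extract_pts {ε l c y : ℝ} (hp : Par ε l c) (h1 : c < y) (h2 : y < c + l)
    (h3 : y ≠ c + l - 1 + ε) (h4 : y ≠ c + ε) {Q : ℝ → Prop} (hQ : ∀ᶠ x in 𝓝 y, Q x) :
    (∃ n, vl ε (orb ε l c n) < y ∧ ds ε l c n = dd ε l c y ∧ Q (vl ε (orb ε l c n))) ∧
    (∃ n, y < vl ε (orb ε l c n) ∧ ds ε l c n = dd ε l c y ∧ Q (vl ε (orb ε l c n))) := by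
  have hev : ∀ᶠ x in 𝓝 y, c < x ∧ x < c + l ∧ dd ε l c x = dd ε l c y ∧ Q x := by
    filter_upwards [eventually_gt_nhds h1, eventually_lt_nhds h2, dd_nhds h3 h4, hQ] with x a b d e
    exact ⟨a, b, d, e⟩
  obtain ⟨p, q, hpq, hsub⟩ := mem_nhds_iff_exists_Ioo_subset.1 hev
  constructor
  · obtain ⟨n, hn1, hn2⟩ := orb_dense hp (p := max p c) (q := y) (max_lt hpq.1 h1)
      (le_max_right _ _) h2.le
    have := hsub ⟨lt_of_le_of_lt (le_max_left _ _) hn1, hn2.trans hpq.2⟩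
    exact ⟨n, hn2, this.2.2.1, this.2.2.2⟩
  · obtain ⟨n, hn1, hn2⟩ := orb_dense hp (p := y) (q := min q (c + l)) (lt_min hpq.2 h2)
      h1.le (min_le_right _ _)
    have := hsub ⟨hpq.1.trans hn1, hn2.trans_le (min_le_left _ _)⟩
    exact ⟨n, hn1, this.2.2.1, this.2.2.2⟩

lemma extract {ε l c lam Lam g0 g1 : ℝ} {M : ℤ × ℤ →+ ℤ × ℤ} (hp : Par ε l c)
    (ha : Adm ε lam Lam g0 g1 M) {k : ℕ → ℕ} (hk : SS (ds ε l c) k)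
    (hM : ∀ n, orb ε l c (k n) = M (orb ε l c n)) :
    Cnd ε l c lam Lam g0 g1 c ∧ Cnd ε l c lam Lam g0 g1 (c + l) := by
  have hl : 0 < l := hp.e0.trans hp.le
  constructor
  · intro y z h1 h2 h3 h4 h5 h6 heq
    have hQ : ∀ᶠ x in 𝓝 y, lam * x + vl ε z < c + l := by
      have : ContinuousAt (fun x => lam * x + vl ε z) y := by fun_prop
      exact this.eventually_lt continuousAt_const (by linarith)
    obtain ⟨⟨n, hn1, hn2, hn3⟩, ⟨m, hm1, hm2, hm3⟩⟩ := extract_pts hp h1 h2 h3 h4 hQ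
    have hmm := mul_lt_mul_of_pos_left hm1 ha.l0
    have hnn := mul_lt_mul_of_pos_left hn1 ha.l0
    have := extract_aux hp ha hk hM (n := n) (m := m) (hm2.trans hn2.symm) h5 (by rw [hm2]; exact h6)
      (by linarith) hm3
    linarith
  · intro y z h1 h2 h3 h4 h5 h6 heq
    have hQ : ∀ᶠ x in 𝓝 y, c < lam * x + vl ε z := by
      have : ContinuousAt (fun x => lam * x + vl ε z) y := by fun_prop
      exact continuousAt_const.eventually_lt this (by linarith)
    obtain ⟨⟨n, hn1, hn2, hn3⟩, ⟨m, hm1, hm2, hm3⟩⟩ := extract_pts hp h1 h2 h3 h4 hQ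
    have hmm := mul_lt_mul_of_pos_left hm1 ha.l0
    have hnn := mul_lt_mul_of_pos_left hn1 ha.l0
    have := extract_aux hp ha hk hM (n := m) (m := n) (hn2.trans hm2.symm) h5 (by rw [hn2]; exact h6)
      hn3.le (by linarith)
    linarith

/-- coset lemma -/
lemma coset {ε l c lam Lam g0 g1 A : ℝ} {M : ℤ × ℤ →+ ℤ × ℤ} (hp : Par ε l c)
    (ha : Adm ε lam Lam g0 g1 M) (hA : A = c ∨ A = c + l) (hC : Cnd ε l c lam Lam g0 g1 A)
    (p : ℤ × ℤ) (q : ℝ) (hq : lam * q = A - vl ε p) :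
    ∃ w : ℤ × ℤ, q + vl ε w = c ∨ q + vl ε w = c + l := by
  have hl : 0 < l := hp.e0.trans hp.le
  -- starting point
  obtain ⟨w0, hw1, hw2, hw3⟩ : ∃ w : ℤ × ℤ, c < q + vl ε w ∧ q + vl ε w < c + l ∧
      0 < gg g0 g1 (p - M w) := by
    obtain ⟨w, h1, h2, h3⟩ := dense_pos (p := q - c - l) (q := q - c) hp.irr hp.e0 hp.e1 ha.p0 ha.p1
      (by linarith) (- gg g0 g1 p / Lam)
    refine ⟨-w, ?_, ?_, ?_⟩
    · rw [vl_neg]; linarith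
    · rw [vl_neg]; linarith
    · rw [div_lt_iff₀ ha.L0] at h3
      rw [gg_sub, ha.hg, gg_neg]; linarith
  let f : ℕ → ℤ × ℤ := fun n => Nat.rec w0 (fun _ w => w + dd ε l c (q + vl ε w)) n
  have f0 : f 0 = w0 := rfl
  have fs : ∀ n, f (n + 1) = f n + dd ε l c (q + vl ε (f n)) := fun n => rfl
  have fI : ∀ n, c ≤ q + vl ε (f n) ∧ q + vl ε (f n) < c + l := by
    intro n
    induction n with
    | zero => rw [f0]; exact ⟨hw1.le, hw2⟩
    | succ n ih => rw [fs, vl_add, ← add_assoc]; exact dd_mem hp ih.1 ih.2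
  have fg : ∀ n : ℕ, gg g0 g1 w0 + n * min g0 g1 ≤ gg g0 g1 (f n) := by
    intro n
    induction n with
    | zero => simp [f0]
    | succ n ih =>
      rw [fs, gg_add]
      have := gg_dd_ge ε l c ha.p0 ha.p1 (q + vl ε (f n))
      push_cast; linarith
  have hex : ∃ n, gg g0 g1 (p - M (f n)) ≤ 0 := by
    have hm : 0 < min g0 g1 := lt_min ha.p0 ha.p1
    obtain ⟨N, hN⟩ := exists_nat_gt ((gg g0 g1 p / Lam - gg g0 g1 w0) / min g0 g1)
    refine ⟨N, ?_⟩
    rw [div_lt_iff₀ hm] at hN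
    have h1 : gg g0 g1 p / Lam < gg g0 g1 (f N) := by linarith [fg N]
    rw [div_lt_iff₀ ha.L0] at h1
    rw [gg_sub, ha.hg]; linarith
  classical
  have hf := Nat.find_spec hex
  have hmin := fun m => Nat.find_min hex (m := m)
  generalize Nat.find hex = K at *
  cases K with
  | zero => rw [f0] at hf; linarith
  | succ n =>
    have h4 := hmin n (by omega)
    push Not at h4
    obtain ⟨hI1, hI2⟩ := fI n
    have hA' : ∀ n, lam * (q + vl ε (f n)) + vl ε (p - M (f n)) = A := by
      intro n
      rw [vl_sub, ha.hv]; linarith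
    rcases lt_or_eq_of_le hf with hf | hf
    · -- interior: must be an endpoint
      rw [fs, map_add, gg_sub, gg_add, ha.hg (dd _ _ _ _)] at hf
      by_cases e1 : q + vl ε (f n) = c
      · exact ⟨_, Or.inl e1⟩
      by_cases e2 : q + vl ε (f n) = c + l - 1 + ε
      · refine ⟨f n + (1, 0), Or.inr ?_⟩
        rw [vl_add]; simp [vl] at *; linarith
      by_cases e3 : q + vl ε (f n) = c + ε
      · refine ⟨f n + (0, 1), Or.inl ?_⟩
        rw [vl_add]; simp [vl] at *; linarith
      exact absurd (hA' n) (hC _ _ (lt_of_le_of_ne hI1 (Ne.symm e1)) hI2 e2 e3 h4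
        (by rw [gg_sub]; linarith))
    · have hz := ha.inj _ hf
      have hA2 := hA' (n + 1)
      rw [hz, vl_zero, add_zero] at hA2
      obtain ⟨hJ1, hJ2⟩ := fI (n + 1)
      have := ha.l0
      have := ha.l1
      have := hp.c0
      have := hp.cl
      refine ⟨f (n + 1), Or.inl ?_⟩
      rcases hA with rfl | rfl
      · nlinarith
      · exfalso; nlinarith


lemma orb_inj {ε l c : ℝ} {n m : ℕ} (h : orb ε l c n = orb ε l c m) : n = m :=
  (gg_orb_mono ε l c one_pos one_pos).injective (congrArg (gg 1 1) h)

lemma cross {ε l c lam Lam g0 g1 : ℝ} (hp : Par ε l c) (hlam : 0 < lam)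
    (hC : Cnd ε l c lam Lam g0 g1 c) (hC' : Cnd ε l c lam Lam g0 g1 (c + l))
    {y x : ℝ} {z : ℤ × ℤ} (hy : c ≤ y) (hy' : y < c + l) (hx : c ≤ x) (hx' : x < c + l)
    (hd : dd ε l c y = dd ε l c x) (h1 : 0 < gg g0 g1 z)
    (h2 : gg g0 g1 z < Lam * gg g0 g1 (dd ε l c y)) (h3 : c ≤ lam * y + vl ε z)
    (h4 : lam * y + vl ε z < c + l) : c ≤ lam * x + vl ε z ∧ lam * x + vl ε z < c + l := by
  have hl : 0 < l := hp.e0.trans hp.le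
  -- no interior solution between y and x
  have key : ∀ A, (A = c ∨ A = c + l) → ∀ t, lam * t + vl ε z = A →
      (y < t ∧ t ≤ x ∨ x < t ∧ t ≤ y) → False := by
    intro A hA t ht hb
    have hb' : c < t ∧ t < c + l := by rcases hb with hb | hb <;> constructor <;> linarith
    have hpos : t ≠ c + l - 1 + ε ∧ t ≠ c + ε ∧ dd ε l c t = dd ε l c y := by
      have hl1 := hp.l1
      unfold dd at hd ⊢
      rcases hb with hb | hb <;>
      · by_cases a1 : y < c + l - 1 + ε <;> by_cases a2 : x < c + l - 1 + ε <;>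
        by_cases a3 : y < c + ε <;> by_cases a4 : x < c + ε <;>
        simp only [a1, a2, a3, a4, if_true, if_false, Prod.mk.injEq] at hd <;>
        first
        | (exfalso; omega)
        | (exfalso; linarith)
        | (refine ⟨by intro h; linarith, by intro h; linarith, ?_⟩
           split_ifs <;> first | rfl | (exfalso; linarith))
    have h2' : gg g0 g1 z < Lam * gg g0 g1 (dd ε l c t) := by rw [hpos.2.2]; exact h2
    rcases hA with rfl | rfl
    · exact hC t z hb'.1 hb'.2 hpos.1 hpos.2.1 h1 h2' ht
    · exact hC' t z hb'.1 hb'.2 hpos.1 hpos.2.1 h1 h2' ht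
  have hdiv : ∀ A, lam * ((A - vl ε z) / lam) + vl ε z = A := by
    intro A; field_simp; ring
  constructor
  · by_contra hcon
    push Not at hcon
    refine key c (Or.inl rfl) _ (hdiv c) (Or.inr ⟨?_, ?_⟩)
    · rw [lt_div_iff₀ hlam]; linarith
    · rw [div_le_iff₀ hlam]; linarith
  · by_contra hcon
    push Not at hcon
    refine key (c + l) (Or.inr rfl) _ (hdiv (c + l)) (Or.inl ⟨?_, ?_⟩)
    · rw [lt_div_iff₀ hlam]; linarith
    · rw [div_le_iff₀ hlam]; linarith

lemma construct {ε l c lam Lam g0 g1 : ℝ} {M : ℤ × ℤ →+ ℤ × ℤ} (hp : Par ε l c)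
    (ha : Adm ε lam Lam g0 g1 M)
    (hC : Cnd ε l c lam Lam g0 g1 c) (hC' : Cnd ε l c lam Lam g0 g1 (c + l)) :
    ∃ k : ℕ → ℕ, SS (ds ε l c) k ∧ ∀ n, orb ε l c (k n) = M (orb ε l c n) := by
  have hmono := gg_orb_mono ε l c ha.p0 ha.p1
  have hl0 := ha.l0
  have hl1 := ha.l1
  have hc0 := hp.c0
  have hcl := hp.cl
  have hex : ∀ n, ∃ j, orb ε l c j = M (orb ε l c n) := by
    intro n
    have h := orb_mem hp n
    apply orb_surj hp ha.p0 ha.p1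
    · rw [ha.hv]; nlinarith
    · rw [ha.hv]; nlinarith
    · rw [ha.hg]
      have := hmono.monotone (Nat.zero_le n)
      simp only [orb, gg_zero] at this
      have := ha.L0
      positivity
  choose k hk using hex
  have hk0 : k 0 = 0 := by
    apply orb_inj (ε := ε) (l := l) (c := c)
    rw [hk]; simp [orb]
  have hkm : StrictMono k := by
    intro a b hab
    apply hmono.lt_iff_lt.1
    simp only [hk, ha.hg]
    exact mul_lt_mul_of_pos_left (hmono hab) ha.L0
  refine ⟨k, ⟨hk0, hkm, ?_⟩, hk⟩
  intro n m hnm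
  -- transfer, closed version
  have tr : ∀ n m, ds ε l c n = ds ε l c m → ∀ z, 0 ≤ gg g0 g1 z →
      gg g0 g1 z ≤ Lam * gg g0 g1 (ds ε l c n) →
      c ≤ lam * vl ε (orb ε l c n) + vl ε z → lam * vl ε (orb ε l c n) + vl ε z < c + l →
      c ≤ lam * vl ε (orb ε l c m) + vl ε z ∧ lam * vl ε (orb ε l c m) + vl ε z < c + l := by
    intro n m hnm z h1 h2 h3 h4
    have hn := orb_mem hp n
    have hm := orb_mem hp m
    rcases eq_or_lt_of_le h1 with h1 | h1
    · have := ha.inj z h1.symm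
      subst this
      rw [vl_zero]
      constructor <;> nlinarith
    rcases eq_or_lt_of_le h2 with h2 | h2
    · have hz : z = M (ds ε l c n) := by
        have := ha.inj (z - M (ds ε l c n)) (by rw [gg_sub, ha.hg, h2]; ring)
        exact sub_eq_zero.1 this
      have := orb_mem hp (m + 1)
      rw [orb_succ, vl_add] at this
      rw [hz, ha.hv, hnm, ← mul_add]
      constructor <;> nlinarith
    · exact cross hp ha.l0 hC hC' hn.1 hn.2 hm.1 hm.2 hnm h1 h2 h3 h4
  have hkn : ∀ n, vl ε (orb ε l c (k n)) = lam * vl ε (orb ε l c n) := fun n => by rw [hk, ha.hv]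
  -- blocks agree
  have blk : ∀ i, i ≤ k (n + 1) - k n →
      orb ε l c (k n + i) - orb ε l c (k n) = orb ε l c (k m + i) - orb ε l c (k m) := by
    intro i
    induction i with
    | zero => simp
    | succ i ih =>
      intro hi
      have ih := ih (by omega)
      obtain ⟨z, hz⟩ : ∃ z, z = orb ε l c (k n + i) - orb ε l c (k n) := ⟨_, rfl⟩
      have hzn : orb ε l c (k n + i) = orb ε l c (k n) + z := by rw [hz]; abel
      have hzm : orb ε l c (k m + i) = orb ε l c (k m) + z := by rw [hz, ih]; abel
      have hz0 : 0 ≤ gg g0 g1 z := by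
        rw [hz, gg_sub]
        have := hmono.monotone (show k n ≤ k n + i by omega)
        linarith
      have p1 : 0 < gg g0 g1 (ds ε l c (k n + i)) := gg_dd_pos ε l c ha.p0 ha.p1 _
      have p2 : 0 < gg g0 g1 (ds ε l c (k m + i)) := gg_dd_pos ε l c ha.p0 ha.p1 _
      have hle1 : gg g0 g1 (z + ds ε l c (k n + i)) ≤ Lam * gg g0 g1 (ds ε l c n) := by
        have := hmono.monotone (show k n + i + 1 ≤ k (n + 1) by omega)
        simp only [orb_succ, hk, map_add, gg_add, hzn] at this
        rw [ha.hg (ds _ _ _ _)] at this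
        rw [gg_add]; linarith
      have o1 := orb_mem hp (k n + i)
      have o2 := orb_mem hp (k m + i)
      have o3 := orb_mem hp (k n + i + 1)
      have o4 := orb_mem hp (k m + i + 1)
      rw [orb_succ, hzn] at o3
      rw [orb_succ, hzm] at o4
      simp only [vl_add, hkn, hzn, hzm] at o1 o2 o3 o4
      have hge : gg g0 g1 (ds ε l c (k m + i)) ≤ gg g0 g1 (ds ε l c (k n + i)) := by
        by_contra hcon
        push Not at hcon
        have t := tr n m hnm _ (by rw [gg_add]; linarith) hle1
          (by rw [vl_add]; linarith) (by rw [vl_add]; linarith)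
        rw [vl_add] at t
        have := gap (y := vl ε (orb ε l c (k m + i))) (z := ds ε l c (k n + i)) hp ha.p0 ha.p1
          (orb_mem hp _).1 (orb_mem hp _).2 (by rw [hzm, vl_add, hkn]; linarith)
          (by rw [hzm, vl_add, hkn]; linarith) p1.le hcon
        rw [this, gg_zero] at p1
        exact lt_irrefl _ p1
      have hge' : gg g0 g1 (ds ε l c (k n + i)) ≤ gg g0 g1 (ds ε l c (k m + i)) := by
        by_contra hcon
        push Not at hcon
        have t := tr m n hnm.symm (z + ds ε l c (k m + i)) (by rw [gg_add]; linarith)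
          (by rw [← hnm]; rw [gg_add] at hle1 ⊢; linarith)
          (by rw [vl_add]; linarith) (by rw [vl_add]; linarith)
        rw [vl_add] at t
        have := gap (y := vl ε (orb ε l c (k n + i))) (z := ds ε l c (k m + i)) hp ha.p0 ha.p1
          (orb_mem hp _).1 (orb_mem hp _).2 (by rw [hzn, vl_add, hkn]; linarith)
          (by rw [hzn, vl_add, hkn]; linarith) p2.le hcon
        rw [this, gg_zero] at p2
        exact lt_irrefl _ p2
      have heq : ds ε l c (k n + i) = ds ε l c (k m + i) :=
        sub_eq_zero.1 (ha.inj _ (by rw [gg_sub]; linarith))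
      rw [← add_assoc, ← add_assoc, orb_succ, orb_succ, heq, add_sub_right_comm, ih]
      abel
  have hkn1 := hkm (Nat.lt_succ_self n)
  have hkm1 := hkm (Nat.lt_succ_self m)
  simp only [Nat.succ_eq_add_one] at hkn1 hkm1
  constructor
  · have h := blk (k (n + 1) - k n) le_rfl
    rw [show k n + (k (n + 1) - k n) = k (n + 1) by omega, hk (n + 1), orb_succ, map_add, hk n,
      add_sub_cancel_left, hnm, hk m] at h
    have h' : orb ε l c (k m + (k (n + 1) - k n)) = orb ε l c (k (m + 1)) := by
      rw [hk (m + 1), orb_succ, map_add, h]; abel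
    have := orb_inj h'
    omega
  · intro i hi
    have a := blk i (by omega)
    have b := blk (i + 1) (by omega)
    rw [← add_assoc, ← add_assoc, orb_succ, orb_succ, add_sub_right_comm, a, add_sub_right_comm] at b
    exact add_left_cancel b

lemma SS_comp {A : Type*} {s : ℕ → A} {k k' : ℕ → ℕ} (h : SS s k) (h' : SS s k') :
    SS s (fun n => k (k' n)) := by
  obtain ⟨h0, hm, hs⟩ := h
  obtain ⟨h0', hm', hs'⟩ := h'
  refine ⟨by simp [h0, h0'], hm.comp hm', ?_⟩
  intro n m hnm
  obtain ⟨hL, hl⟩ := hs' n m hnm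
  have key : ∀ i, i ≤ k' (n + 1) - k' n → k (k' n + i) - k (k' n) = k (k' m + i) - k (k' m) ∧
      ∀ j, j < k (k' n + i) - k (k' n) → s (k (k' n) + j) = s (k (k' m) + j) := by
    intro i
    induction i with
    | zero => simp
    | succ i ih =>
      intro hi
      obtain ⟨a, b⟩ := ih (by omega)
      obtain ⟨d, e⟩ := hs _ _ (hl i (by omega))
      have m1 := hm.monotone (show k' n ≤ k' n + i by omega)
      have m2 := hm.monotone (show k' m ≤ k' m + i by omega)
      have m3 := hm.monotone (show k' n + i ≤ k' n + i + 1 by omega)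
      have m4 := hm.monotone (show k' m + i ≤ k' m + i + 1 by omega)
      refine ⟨by rw [← add_assoc, ← add_assoc]; omega, ?_⟩
      intro j hj
      by_cases hj' : j < k (k' n + i) - k (k' n)
      · exact b j hj'
      · rw [← add_assoc] at hj
        have := e (j - (k (k' n + i) - k (k' n))) (by omega)
        rwa [show k (k' n + i) + (j - (k (k' n + i) - k (k' n))) = k (k' n) + j by omega,
          show k (k' m + i) + (j - (k (k' n + i) - k (k' n))) = k (k' m) + j by omega] at this
  have a := hm' (Nat.lt_succ_self n)
  have b := hm' (Nat.lt_succ_self m)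
  simp only [Nat.succ_eq_add_one] at a b
  have := key (k' (n + 1) - k' n) le_rfl
  rwa [show k' n + (k' (n + 1) - k' n) = k' (n + 1) by omega,
    show k' m + (k' (n + 1) - k' n) = k' (m + 1) by omega] at this

lemma SS_congr {A B : Type*} {s : ℕ → A} {s' : ℕ → B} {k : ℕ → ℕ} (h : SS s k)
    (hc : ∀ n m, s n = s m ↔ s' n = s' m) : SS s' k :=
  ⟨h.1, h.2.1, fun n m hnm => ⟨(h.2.2 n m ((hc n m).2 hnm)).1,
    fun i hi => (hc _ _).1 ((h.2.2 n m ((hc n m).2 hnm)).2 i hi)⟩⟩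

/-- iterates of an endomorphism -/
def itM (M : ℤ × ℤ →+ ℤ × ℤ) : ℕ → (ℤ × ℤ →+ ℤ × ℤ)
  | 0 => AddMonoidHom.id _
  | n + 1 => M.comp (itM M n)

lemma SS_pow {ε l c : ℝ} {k : ℕ → ℕ} {M : ℤ × ℤ →+ ℤ × ℤ} (hk : SS (ds ε l c) k)
    (hM : ∀ n, orb ε l c (k n) = M (orb ε l c n)) (p : ℕ) :
    ∃ k', SS (ds ε l c) k' ∧ ∀ n, orb ε l c (k' n) = itM M p (orb ε l c n) := by
  induction p with
  | zero =>
    refine ⟨id, ⟨rfl, strictMono_id, ?_⟩, fun n => rfl⟩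
    intro n m hnm
    simpa using hnm
  | succ p ih =>
    obtain ⟨k', h1, h2⟩ := ih
    exact ⟨_, SS_comp hk h1, fun n => by rw [hM, h2]; rfl⟩

lemma hv_pow {ε lam : ℝ} {M : ℤ × ℤ →+ ℤ × ℤ} (hv : ∀ z, vl ε (M z) = lam * vl ε z) (p : ℕ) (z : ℤ × ℤ) :
    vl ε (itM M p z) = lam ^ p * vl ε z := by
  induction p with
  | zero => simp [itM]
  | succ p ih => simp only [itM, AddMonoidHom.comp_apply]; rw [hv, ih]; ring

lemma hg_pow {g0 g1 Lam : ℝ} {M : ℤ × ℤ →+ ℤ × ℤ} (hv : ∀ z, gg g0 g1 (M z) = Lam * gg g0 g1 z)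
    (p : ℕ) (z : ℤ × ℤ) : gg g0 g1 (itM M p z) = Lam ^ p * gg g0 g1 z := by
  induction p with
  | zero => simp [itM]
  | succ p ih => simp only [itM, AddMonoidHom.comp_apply]; rw [hv, ih]; ring

lemma Adm_pow {ε lam Lam g0 g1 : ℝ} {M : ℤ × ℤ →+ ℤ × ℤ} (h : Adm ε lam Lam g0 g1 M) {p : ℕ}
    (hp : p ≠ 0) : Adm ε (lam ^ p) (Lam ^ p) g0 g1 (itM M p) :=
  ⟨hv_pow h.hv p, hg_pow h.hg p, pow_pos h.l0 p, pow_lt_one₀ h.l0.le h.l1 hp, pow_pos h.L0 p,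
    h.p0, h.p1, h.inj⟩

lemma hom_unique {ε lam : ℝ} (h : Irrational ε) {M M' : ℤ × ℤ →+ ℤ × ℤ}
    (hv : ∀ z, vl ε (M z) = lam * vl ε z) (hv' : ∀ z, vl ε (M' z) = lam * vl ε z) : M = M' := by
  refine DFunLike.ext _ _ fun z => vl_inj h ?_
  rw [hv, hv']

lemma fix_to_SS {A : Type*} {φ : A → List A} {s : ℕ → A} {k : ℕ → ℕ} (hm : StrictMono k)
    (h0 : k 0 = 0) (hs : ∀ n, k (n + 1) = k n + (φ (s n)).length)
    (hl : ∀ n, ∀ i, (h : i < (φ (s n)).length) → s (k n + i) = (φ (s n)).get ⟨i, h⟩) : SS s k := by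
  refine ⟨h0, hm, fun n m hnm => ⟨?_, ?_⟩⟩
  · rw [hs, hs, hnm]; omega
  · intro i hi
    rw [hs] at hi
    have h1 : i < (φ (s n)).length := by omega
    have h2 : i < (φ (s m)).length := by rw [← hnm]; omega
    rw [hl n i h1, hl m i h2]
    simp only [List.get_eq_getElem]
    congr 1
    rw [hnm]

lemma SS_to_fix {A : Type*} {s : ℕ → A} {k : ℕ → ℕ} (h : SS s k) :
    ∃ φ : A → List A, (∀ a, φ a ≠ []) ∧
      (∀ n, φ (s n) = List.ofFn fun i : Fin (k (n + 1) - k n) => s (k n + i)) ∧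
      IsFixedPointSubst φ s := by
  classical
  let N : A → ℕ := fun a => if hx : ∃ n, s n = a then hx.choose else 0
  let φ : A → List A := fun a => if hx : ∃ n, s n = a then
    List.ofFn fun i : Fin (k (hx.choose + 1) - k hx.choose) => s (k hx.choose + i) else [a]
  have hφ : ∀ n, φ (s n) = List.ofFn fun i : Fin (k (n + 1) - k n) => s (k n + i) := by
    intro n
    have hx : ∃ m, s m = s n := ⟨n, rfl⟩
    simp only [φ, dif_pos hx]
    obtain ⟨a, b⟩ := h.2.2 _ _ hx.choose_spec
    apply List.ext_get
    · simp [a]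
    · intro i h1 h2
      simp only [List.length_ofFn] at h1 h2
      simpa using b i h1
  have hpos : ∀ n, 0 < k (n + 1) - k n := fun n => by
    have := h.2.1 (Nat.lt_succ_self n)
    simp only [Nat.succ_eq_add_one] at this; omega
  refine ⟨φ, ?_, hφ, k, h.2.1, h.1, ?_, ?_⟩
  · intro a
    by_cases hx : ∃ n, s n = a
    · obtain ⟨n, rfl⟩ := hx
      rw [hφ]
      intro hcon
      have := congrArg List.length hcon
      simp at this
      have := hpos n
      omega
    · simp [φ, hx]
  · intro n
    rw [hφ, List.length_ofFn]
    have := hpos n; omega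
  · intro n i hi
    simp [hφ]


/-- Sturmian coding -/
noncomputable def w2 (ε c : ℝ) (n : ℕ) : Fin 2 := if vl ε (orb ε 1 c n) < c + ε then 0 else 1

lemma T3_eq (ε l c x : ℝ) : T3 ε l c x = x + vl ε (dd ε l c x) := by
  unfold T3 dd vl
  split_ifs <;> simp <;> ring

lemma T3_iter (ε l c : ℝ) (n : ℕ) : (T3 ε l c)^[n] 0 = vl ε (orb ε l c n) := by
  induction n with
  | zero => simp [orb, vl_zero]
  | succ n ih => rw [Function.iterate_succ_apply', ih, orb, vl_add, T3_eq]

/-- displacement of a letter -/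
def e3 : Fin 3 → ℤ × ℤ := ![(1, 0), (1, 1), (0, 1)]
/-- displacement of a binary letter -/
def e2 : Fin 2 → ℤ × ℤ := ![(1, 0), (0, 1)]

lemma e3_inj : Function.Injective e3 := by
  intro a b; revert a b; decide
lemma e2_inj : Function.Injective e2 := by
  intro a b; revert a b; decide

lemma ds_e3 (ε l c : ℝ) (n : ℕ) : ds ε l c n = e3 (threeIetWordN ε l c n) := by
  unfold ds threeIetWordN letter3 dd
  rw [T3_iter]
  split_ifs <;> rfl

lemma ds_e2 (ε c : ℝ) (n : ℕ) : ds ε 1 c n = e2 (w2 ε c n) := by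
  unfold ds w2 dd
  simp only [add_sub_cancel_right]
  split_ifs <;> rfl

lemma concat_iff {A B : Type*} {σ : A → List B} (hσ : ∀ a, σ a ≠ []) {u : ℕ → A} {w : ℕ → B} {k : ℕ → ℕ}
    (h0 : k 0 = 0) (hk : ∀ n, k (n + 1) = k n + (σ (u n)).length)
    (hw : ∀ n, ∀ i, (h : i < (σ (u n)).length) → w (k n + i) = (σ (u n)).get ⟨i, h⟩) (v : ℕ → B) :
    IsConcatImage σ u v ↔ v = w := by
  constructor
  · rintro ⟨k', h0', hk', hv⟩
    have hkk : k' = k := by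
      funext n
      induction n with
      | zero => rw [h0, h0']
      | succ n ih => rw [hk, hk', ih]
    subst hkk
    have hm : StrictMono k' := strictMono_nat_of_lt_succ fun n => by
      rw [hk]; have := List.length_pos_iff.2 (hσ (u n)); omega
    funext m
    have hex : ∃ n, m < k' n := ⟨m + 1, lt_of_lt_of_le (Nat.lt_succ_self m) (hm.le_apply)⟩
    classical
    have hf := Nat.find_spec hex
    have hmin := fun m => Nat.find_min hex (m := m)
    generalize Nat.find hex = K at *
    cases K with
    | zero => omega
    | succ n =>
      have h4 := hmin n (by omega)
      rw [hk] at hf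
      have hi : m - k' n < (σ (u n)).length := by omega
      have := (hv n _ hi).trans (hw n _ hi).symm
      rwa [show k' n + (m - k' n) = m by omega] at this
  · rintro rfl
    exact ⟨k, h0, hk, hw⟩

/-- Cut points. -/
noncomputable def kk (ε l c : ℝ) (n : ℕ) : ℕ := ((orb ε l c n).1 + (orb ε l c n).2).toNat

lemma orb_nonneg (ε l c : ℝ) (n : ℕ) : 0 ≤ (orb ε l c n).1 ∧ 0 ≤ (orb ε l c n).2 := by
  induction n with
  | zero => simp [orb]
  | succ n ih =>
    rw [orb]
    unfold dd
    split_ifs <;> simp <;> omega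

lemma kk_cast (ε l c : ℝ) (n : ℕ) : (kk ε l c n : ℤ) = (orb ε l c n).1 + (orb ε l c n).2 := by
  have := orb_nonneg ε l c n
  unfold kk; omega

lemma kk_succ (ε l c : ℝ) (n : ℕ) :
    kk ε l c (n + 1) = kk ε l c n + if threeIetWordN ε l c n = 1 then 2 else 1 := by
  zify
  rw [kk_cast, kk_cast, orb_succ, ds_e3]
  generalize threeIetWordN ε l c n = a
  fin_cases a <;> simp [e3] <;> ring

/-- case description of letters -/
lemma letter_cases (ε l c : ℝ) (n : ℕ) :
    (threeIetWordN ε l c n = 0 ∧ vl ε (orb ε l c n) < c + l - 1 + ε) ∨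
    (threeIetWordN ε l c n = 1 ∧ c + l - 1 + ε ≤ vl ε (orb ε l c n) ∧ vl ε (orb ε l c n) < c + ε) ∨
    (threeIetWordN ε l c n = 2 ∧ c + l - 1 + ε ≤ vl ε (orb ε l c n) ∧ c + ε ≤ vl ε (orb ε l c n)) := by
  unfold threeIetWordN letter3
  rw [T3_iter]
  split_ifs with h1 h2
  · simp [h1]
  · simp [h2]; linarith
  · simp; constructor <;> linarith

lemma orb_kk01 {ε l c : ℝ} (hp : Par ε l c) (n : ℕ) :
    orb ε 1 c (kk ε l c n) = orb ε l c n ∧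
    ∀ i, (h : i < (sigma01 (threeIetWordN ε l c n)).length) →
      w2 ε c (kk ε l c n + i) = (sigma01 (threeIetWordN ε l c n)).get ⟨i, h⟩ := by
  obtain ⟨_, _, _, _, _, _, _, _⟩ := id hp
  -- second part and step from first part
  have key : ∀ n, orb ε 1 c (kk ε l c n) = orb ε l c n →
      (∀ i, (h : i < (sigma01 (threeIetWordN ε l c n)).length) →
      w2 ε c (kk ε l c n + i) = (sigma01 (threeIetWordN ε l c n)).get ⟨i, h⟩) ∧
      orb ε 1 c (kk ε l c (n + 1)) = orb ε l c (n + 1) := by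
    intro n hn
    have hs := orb_succ ε 1 c (kk ε l c n)
    rw [ds_e2, hn] at hs
    rw [kk_succ, orb_succ, ds_e3]
    have hmem := orb_mem hp n
    rcases letter_cases ε l c n with ⟨ha, h1⟩ | ⟨ha, h1, h2⟩ | ⟨ha, h1, h2⟩
    · have hw : w2 ε c (kk ε l c n) = 0 := by unfold w2; rw [hn, if_pos (by linarith)]
      rw [ha]
      refine ⟨?_, ?_⟩
      · intro i hi
        simp [sigma01] at hi
        subst hi
        simp [sigma01, hw]
      · rw [if_neg (by decide), hs, hw]; rfl
    · have hw : w2 ε c (kk ε l c n) = 0 := by unfold w2; rw [hn, if_pos (by linarith)]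
      rw [hw] at hs
      have hw' : w2 ε c (kk ε l c n + 1) = 1 := by
        unfold w2; rw [hs, if_neg]
        rw [vl_add]; simp [vl, e2] at *; linarith
      rw [ha]
      refine ⟨?_, ?_⟩
      · intro i hi
        have : i = 0 ∨ i = 1 := by simp [sigma01] at hi; omega
        rcases this with rfl | rfl
        · simp [sigma01, hw]
        · simp [sigma01, hw']
      · rw [if_pos rfl, ← add_assoc _ 1 1, orb_succ, hs, ds_e2, hw', add_assoc]; rfl
    · have hw : w2 ε c (kk ε l c n) = 1 := by unfold w2; rw [hn, if_neg (by linarith)]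
      rw [ha]
      refine ⟨?_, ?_⟩
      · intro i hi
        simp [sigma01] at hi
        subst hi
        simp [sigma01, hw]
      · rw [if_neg (by decide), hs, hw]; rfl
  have hall : ∀ n, orb ε 1 c (kk ε l c n) = orb ε l c n := by
    intro n
    induction n with
    | zero => simp [kk, orb]
    | succ n ih => exact (key n ih).2
  exact ⟨hall n, (key n (hall n)).1⟩

lemma orb_kk10 {ε l c : ℝ} (hp : Par ε l c) (n : ℕ) :
    orb ε 1 (c + l - 1) (kk ε l c n) = orb ε l c n ∧
    ∀ i, (h : i < (sigma10 (threeIetWordN ε l c n)).length) →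
      w2 ε (c + l - 1) (kk ε l c n + i) = (sigma10 (threeIetWordN ε l c n)).get ⟨i, h⟩ := by
  obtain ⟨_, _, _, _, _, _, _, _⟩ := id hp
  have key : ∀ n, orb ε 1 (c + l - 1) (kk ε l c n) = orb ε l c n →
      (∀ i, (h : i < (sigma10 (threeIetWordN ε l c n)).length) →
      w2 ε (c + l - 1) (kk ε l c n + i) = (sigma10 (threeIetWordN ε l c n)).get ⟨i, h⟩) ∧
      orb ε 1 (c + l - 1) (kk ε l c (n + 1)) = orb ε l c (n + 1) := by
    intro n hn
    have hs := orb_succ ε 1 (c + l - 1) (kk ε l c n)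
    rw [ds_e2, hn] at hs
    rw [kk_succ, orb_succ, ds_e3]
    have hmem := orb_mem hp n
    rcases letter_cases ε l c n with ⟨ha, h1⟩ | ⟨ha, h1, h2⟩ | ⟨ha, h1, h2⟩
    · have hw : w2 ε (c + l - 1) (kk ε l c n) = 0 := by unfold w2; rw [hn, if_pos (by linarith)]
      rw [ha]
      refine ⟨?_, ?_⟩
      · intro i hi
        simp [sigma10] at hi
        subst hi
        simp [sigma10, hw]
      · rw [if_neg (by decide), hs, hw]; rfl
    · have hw : w2 ε (c + l - 1) (kk ε l c n) = 1 := by unfold w2; rw [hn, if_neg (by linarith)]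
      rw [hw] at hs
      have hw' : w2 ε (c + l - 1) (kk ε l c n + 1) = 0 := by
        unfold w2; rw [hs, if_pos]
        rw [vl_add]; simp [vl, e2] at *; linarith
      rw [ha]
      refine ⟨?_, ?_⟩
      · intro i hi
        have : i = 0 ∨ i = 1 := by simp [sigma10] at hi; omega
        rcases this with rfl | rfl
        · simp [sigma10, hw]
        · simp [sigma10, hw']
      · rw [if_pos rfl, ← add_assoc _ 1 1, orb_succ, hs, ds_e2, hw', add_assoc]; rfl
    · have hw : w2 ε (c + l - 1) (kk ε l c n) = 1 := by unfold w2; rw [hn, if_neg (by linarith)]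
      rw [ha]
      refine ⟨?_, ?_⟩
      · intro i hi
        simp [sigma10] at hi
        subst hi
        simp [sigma10, hw]
      · rw [if_neg (by decide), hs, hw]; rfl
  have hall : ∀ n, orb ε 1 (c + l - 1) (kk ε l c n) = orb ε l c n := by
    intro n
    induction n with
    | zero => simp [kk, orb]
    | succ n ih => exact (key n ih).2
  exact ⟨hall n, (key n (hall n)).1⟩

lemma concat01 {ε l c : ℝ} (hp : Par ε l c) (v : ℕ → Fin 2) :
    IsConcatImage sigma01 (threeIetWordN ε l c) v ↔ v = w2 ε c := by
  refine concat_iff (k := kk ε l c) (by decide) (by simp [kk, orb]) ?_ (fun n => (orb_kk01 hp n).2) v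
  intro n
  rw [kk_succ]
  generalize threeIetWordN ε l c n = a
  fin_cases a <;> simp [sigma01]

lemma concat10 {ε l c : ℝ} (hp : Par ε l c) (v : ℕ → Fin 2) :
    IsConcatImage sigma10 (threeIetWordN ε l c) v ↔ v = w2 ε (c + l - 1) := by
  refine concat_iff (k := kk ε l c) (by decide) (by simp [kk, orb]) ?_ (fun n => (orb_kk10 hp n).2) v
  intro n
  rw [kk_succ]
  generalize threeIetWordN ε l c n = a
  fin_cases a <;> simp [sigma10]

lemma Par.left {ε l c : ℝ} (hp : Par ε l c) : Par ε 1 c := by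
  obtain ⟨h1, h2, h3, h4, h5, h6, h7, h8⟩ := hp
  exact ⟨h1, h2, h3, h3, by linarith, le_rfl, h7, by linarith⟩

lemma Par.right {ε l c : ℝ} (hp : Par ε l c) : Par ε 1 (c + l - 1) := by
  obtain ⟨h1, h2, h3, h4, h5, h6, h7, h8⟩ := hp
  exact ⟨h1, h2, h3, h3, by linarith, le_rfl, by linarith, by linarith⟩

/-- uniform hitting -/
lemma uniform_hit {ε l c g0 g1 : ℝ} (hp : Par ε l c) (hg0 : 0 < g0) (hg1 : 0 < g1) {p q : ℝ}
    (hpq : p < q) : ∃ K : ℝ, ∀ y ∈ Set.Icc c (c + l), ∃ z : ℤ × ℤ, 0 < gg g0 g1 z ∧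
      gg g0 g1 z ≤ K ∧ p < y + vl ε z ∧ y + vl ε z < q := by
  refine (isCompact_Icc (a := c) (b := c + l)).induction_on (p := fun s => ∃ K : ℝ, ∀ y ∈ s,
    ∃ z : ℤ × ℤ, 0 < gg g0 g1 z ∧ gg g0 g1 z ≤ K ∧ p < y + vl ε z ∧ y + vl ε z < q)
    ⟨0, by simp⟩ ?_ ?_ ?_
  · rintro s t hst ⟨K, hK⟩
    exact ⟨K, fun y hy => hK y (hst hy)⟩
  · rintro s t ⟨K, hK⟩ ⟨K', hK'⟩
    refine ⟨max K K', ?_⟩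
    rintro y (hy | hy)
    · obtain ⟨z, a, b, d⟩ := hK y hy
      exact ⟨z, a, b.trans (le_max_left _ _), d⟩
    · obtain ⟨z, a, b, d⟩ := hK' y hy
      exact ⟨z, a, b.trans (le_max_right _ _), d⟩
  · intro y _
    obtain ⟨z, h1, h2, h3⟩ := dense_pos (p := p - y) (q := q - y) hp.irr hp.e0 hp.e1 hg0 hg1
      (by linarith) 0
    refine ⟨{x | p < x + vl ε z ∧ x + vl ε z < q}, ?_, gg g0 g1 z, ?_⟩
    · apply mem_nhdsWithin_of_mem_nhds
      have hc : ContinuousAt (fun x => x + vl ε z) y := by fun_prop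
      exact (continuousAt_const.eventually_lt hc (by linarith)).and
        (hc.eventually_lt continuousAt_const (by linarith))
    · intro x hx
      exact ⟨z, h3, le_rfl, hx.1, hx.2⟩


/-- Indicator of the arc `[l, 1)` on the circle. -/
noncomputable def chi (l x : ℝ) : ℝ := if l ≤ Int.fract x then 1 else 0

/-- Discrepancy sums. -/
noncomputable def disc (ε l θ : ℝ) (m : ℕ) (x : ℝ) : ℝ :=
  ∑ j ∈ Finset.range m, (chi l (x - j * ε) - θ)

lemma chi_per (l x : ℝ) (n : ℤ) : chi l (x + n) = chi l x := by
  simp [chi, Int.fract_add_intCast]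

lemma chi_right {l : ℝ} (hl : l ≤ 1) (x : ℝ) : ∀ᶠ t in 𝓝[>] x, chi l t = chi l x := by
  have hf := Int.floor_add_fract x
  have hf1 := Int.fract_lt_one x
  have hf0 := Int.fract_nonneg x
  by_cases h : l ≤ Int.fract x
  · have : Set.Ioo x (⌊x⌋ + 1) ∈ 𝓝[>] x := Ioo_mem_nhdsGT (by linarith)
    filter_upwards [this] with t ht
    have h1 : ⌊t⌋ = ⌊x⌋ := by
      rw [Int.floor_eq_iff]; exact ⟨by linarith [ht.1], ht.2⟩
    have h2 : l ≤ Int.fract t := by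
      have := Int.floor_add_fract t
      rw [h1] at this; linarith [ht.1]
    simp [chi, h, h2]
  · have : Set.Ioo x (⌊x⌋ + l) ∈ 𝓝[>] x := Ioo_mem_nhdsGT (by linarith)
    filter_upwards [this] with t ht
    have h1 : ⌊t⌋ = ⌊x⌋ := by
      rw [Int.floor_eq_iff]; exact ⟨by linarith [ht.1], by linarith [ht.2]⟩
    have h2 : ¬ l ≤ Int.fract t := by
      have := Int.floor_add_fract t
      rw [h1] at this; linarith [ht.2]
    simp [chi, h, h2]

lemma disc_per (ε l θ : ℝ) (m : ℕ) (x : ℝ) (n : ℤ) : disc ε l θ m (x + n) = disc ε l θ m x := by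
  unfold disc
  refine Finset.sum_congr rfl fun j _ => ?_
  rw [show x + n - j * ε = x - j * ε + n by ring, chi_per]

lemma disc_add (ε l θ : ℝ) (m n : ℕ) (x : ℝ) :
    disc ε l θ (n + m) x = disc ε l θ n x + disc ε l θ m (x - n * ε) := by
  unfold disc
  rw [Finset.sum_range_add]
  congr 1
  refine Finset.sum_congr rfl fun j _ => ?_
  push_cast
  rw [show x - (n + j : ℝ) * ε = x - n * ε - j * ε by ring]

lemma disc_bdd {ε l θ x0 B : ℝ} (h : Irrational ε) (h0 : 0 < ε) (h1 : ε < 1) (hl : l ≤ 1)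
    (hB : ∀ m, |disc ε l θ m x0| ≤ B) (m : ℕ) (x : ℝ) : |disc ε l θ m x| ≤ 2 * B := by
  have hev : ∀ᶠ t in 𝓝[>] x, ∀ j ∈ Finset.range m, chi l (t - j * ε) = chi l (x - j * ε) := by
    rw [Filter.eventually_all_finset]
    intro j _
    have ht : Tendsto (fun t : ℝ => t - j * ε) (𝓝[>] x) (𝓝[>] (x - j * ε)) := by
      refine tendsto_nhdsWithin_iff.2 ⟨?_, ?_⟩
      · exact ((continuous_id.sub continuous_const).tendsto x).mono_left nhdsWithin_le_nhds
      · filter_upwards [self_mem_nhdsWithin] with t ht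
        have : x < t := ht
        simp only [Set.mem_Ioi]; linarith
    exact ht.eventually (chi_right hl _)
  obtain ⟨u, hu, hsub⟩ := (mem_nhdsGT_iff_exists_Ioo_subset).1 hev
  have hu' : x < u := hu
  obtain ⟨z, hz1, hz2, hz3⟩ := dense_pos (ε := ε) (g0 := 1) (g1 := 1) h h0 h1 one_pos one_pos
    (p := x - x0) (q := u - x0) (by linarith) 0
  have ht := hsub (show x0 + vl ε z ∈ Set.Ioo x u from ⟨by linarith, by linarith⟩)
  have ht' : ∀ j ∈ Finset.range m, chi l (x0 + vl ε z - j * ε) = chi l (x - j * ε) := ht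
  have e1 : disc ε l θ m x = disc ε l θ m (x0 + vl ε z) := by
    unfold disc
    exact Finset.sum_congr rfl fun j hj => by rw [ht' j hj]
  have hpos : 0 < z.1 + z.2 := by
    simp only [gg] at hz3
    have : (0 : ℝ) < ((z.1 + z.2 : ℤ) : ℝ) := by push_cast; linarith
    exact_mod_cast this
  obtain ⟨N, hN⟩ := Int.eq_ofNat_of_zero_le hpos.le
  have e2 : x0 + vl ε z = x0 - N * ε + (z.1 : ℤ) := by
    have : ((z.1 + z.2 : ℤ) : ℝ) = (N : ℝ) := by rw [hN]; simp
    push_cast at this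
    rw [← this]; simp [vl]; ring
  have e3 := disc_add ε l θ m N x0
  rw [e1, e2, disc_per]
  have a := abs_le.1 (hB (N + m))
  have b := abs_le.1 (hB N)
  rw [abs_le]
  constructor <;> linarith

lemma chi_meas (l : ℝ) : Measurable (chi l) :=
  Measurable.ite (measurableSet_le measurable_const measurable_fract) measurable_const measurable_const

lemma chi_int {l : ℝ} (hl0 : 0 < l) (hl1 : l < 1) : ∫ x in (0:ℝ)..1, chi l x = 1 - l := by
  have hI : ∀ a b : ℝ, IntervalIntegrable (chi l) MeasureTheory.volume a b := by
    intro a b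
    rw [intervalIntegrable_iff]
    refine MeasureTheory.Measure.integrableOn_of_bounded (by simp [Set.uIoc]) (chi_meas l).aestronglyMeasurable (M := 1) ?_
    refine Filter.Eventually.of_forall fun x => ?_
    unfold chi; split_ifs <;> simp
  rw [← intervalIntegral.integral_add_adjacent_intervals (hI 0 l) (hI l 1)]
  have ae1 : ∀ᵐ x : ℝ, x ≠ l := by simp [MeasureTheory.ae_iff]
  have ae2 : ∀ᵐ x : ℝ, x ≠ 1 := by simp [MeasureTheory.ae_iff]
  have i1 : ∫ x in (0:ℝ)..l, chi l x = ∫ x in (0:ℝ)..l, (0:ℝ) := by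
    refine intervalIntegral.integral_congr_ae ?_
    filter_upwards [ae1] with x hx hx2
    rw [Set.uIoc_of_le hl0.le] at hx2
    have : x < l := lt_of_le_of_ne hx2.2 hx
    have hf : Int.fract x = x := Int.fract_eq_self.2 ⟨hx2.1.le, by linarith⟩
    simp [chi, hf, this]
  have i2 : ∫ x in l..1, chi l x = ∫ x in l..1, (1:ℝ) := by
    refine intervalIntegral.integral_congr_ae ?_
    filter_upwards [ae2] with x hx hx2
    rw [Set.uIoc_of_le hl1.le] at hx2
    have : x < 1 := lt_of_le_of_ne hx2.2 hx
    have hf : Int.fract x = x := Int.fract_eq_self.2 ⟨by linarith [hx2.1], by linarith⟩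
    simp [chi, hf, hx2.1.le]
  rw [i1, i2]; simp

lemma kesten {ε l θ x0 B : ℝ} (h : Irrational ε) (h0 : 0 < ε) (h1 : ε < 1) (hl0 : 0 < l) (hl1 : l < 1)
    (hB : ∀ m, |disc ε l θ m x0| ≤ B) : l ∈ Zbr ε := by
  have hb := disc_bdd h h0 h1 hl1.le hB
  set G : ℝ → ℝ := fun x => limsup (fun m => disc ε l θ m x) atTop with hG
  have bdd : ∀ x, IsBoundedUnder (· ≤ ·) atTop (fun m => disc ε l θ m x) := fun x =>
    isBoundedUnder_of ⟨2 * B, fun m => (abs_le.1 (hb m x)).2⟩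
  have bdd' : ∀ x, IsBoundedUnder (· ≥ ·) atTop (fun m => disc ε l θ m x) := fun x =>
    isBoundedUnder_of ⟨-(2 * B), fun m => (abs_le.1 (hb m x)).1⟩
  have hGe : ∀ x, G x = (chi l x - θ) + G (x - ε) := by
    intro x
    have e : ∀ m, disc ε l θ (m + 1) x = (chi l x - θ) + disc ε l θ m (x - ε) := by
      intro m
      have := disc_add ε l θ m 1 x
      rw [add_comm m 1, this]
      simp [disc]
    have := Filter.limsup_nat_add (fun m => disc ε l θ m x) 1
    simp only [hG]
    rw [← this]
    simp only [e]
    exact limsup_const_add atTop _ _ (bdd _) (bdd' _).isCoboundedUnder_le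
  have hGm : Measurable G := by
    refine Measurable.limsup fun m => ?_
    unfold disc
    refine Finset.measurable_sum _ fun j _ => ?_
    exact ((chi_meas l).comp (measurable_id.sub_const _)).sub_const _
  have hGb : ∀ x, |G x| ≤ 2 * B := by
    intro x
    rw [abs_le]
    constructor
    · exact le_limsup_of_frequently_le (Frequently.of_forall fun m => (abs_le.1 (hb m x)).1) (bdd x)
    · exact limsup_le_of_le (bdd' x).isCoboundedUnder_le (Eventually.of_forall fun m => (abs_le.1 (hb m x)).2)
  have hGp : Function.Periodic G 1 := by
    intro x
    simp only [hG]
    have := fun m => disc_per ε l θ m x 1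
    push_cast at this
    simp only [this]
  have hGi : ∀ a b : ℝ, IntervalIntegrable G MeasureTheory.volume a b := by
    intro a b
    rw [intervalIntegrable_iff]
    exact MeasureTheory.Measure.integrableOn_of_bounded (by simp [Set.uIoc]) hGm.aestronglyMeasurable
      (M := 2 * B) (Eventually.of_forall fun x => hGb x)
  have shift : ∀ {F : ℝ → ℂ}, Function.Periodic F 1 → ∫ x in (0:ℝ)..1, F (x - ε) = ∫ x in (0:ℝ)..1, F x := by
    intro F hF
    rw [intervalIntegral.integral_comp_sub_right]
    have := hF.intervalIntegral_add_eq (0 - ε) 0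
    rw [show (1:ℝ) - ε = 0 - ε + 1 by ring, this]; simp
  have hθ : θ = 1 - l := by
    have s : ∫ x in (0:ℝ)..1, G (x - ε) = ∫ x in (0:ℝ)..1, G x := by
      rw [intervalIntegral.integral_comp_sub_right]
      have := hGp.intervalIntegral_add_eq (0 - ε) 0
      rw [show (1:ℝ) - ε = 0 - ε + 1 by ring, this]; simp
    have e : ∫ x in (0:ℝ)..1, (G x - G (x - ε)) = ∫ x in (0:ℝ)..1, (chi l x - θ) := by
      congr 1; ext x; rw [hGe x]; ring
    rw [intervalIntegral.integral_sub (hGi 0 1), s, intervalIntegral.integral_sub, chi_int hl0 hl1] at e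
    · simp at e; linarith
    · rw [intervalIntegrable_iff]
      refine MeasureTheory.Measure.integrableOn_of_bounded (by simp [Set.uIoc]) (chi_meas l).aestronglyMeasurable (M := 1) ?_
      refine Filter.Eventually.of_forall fun x => ?_
      unfold chi; split_ifs <;> simp
    · simp
    · have := (hGi (0 - ε) (1 - ε)).comp_sub_right ε
      simpa using this
  set H : ℝ → ℂ := fun x => Complex.exp (2 * Real.pi * Complex.I * G x) with hH
  have hHe : ∀ x, H x = Complex.exp (-(2 * Real.pi * Complex.I * θ)) * H (x - ε) := by
    intro x
    simp only [hH]
    rw [hGe x, ← Complex.exp_add]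
    unfold chi
    split_ifs
    · rw [Complex.exp_eq_exp_iff_exists_int]
      refine ⟨1, ?_⟩
      push_cast; ring
    · congr 1; push_cast; ring
  have hHp : Function.Periodic H 1 := by
    intro x; simp only [hH, hGp x]
  have hHn : ∀ x, ‖H x‖ = 1 := by
    intro x
    simp only [hH]
    rw [show 2 * (Real.pi : ℂ) * Complex.I * G x = ((2 * Real.pi * G x : ℝ) : ℂ) * Complex.I by push_cast; ring]
    exact Complex.norm_exp_ofReal_mul_I _
  have hHm : Measurable H := by
    refine Complex.measurable_exp.comp ?_
    exact (Complex.measurable_ofReal.comp hGm).const_mul _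
  have hL2 : MeasureTheory.MemLp H 2 (MeasureTheory.volume.restrict (Set.Ioc (0:ℝ) 1)) :=
    MeasureTheory.MemLp.of_bound hHm.aestronglyMeasurable 1 (Eventually.of_forall fun x => (hHn x).le)
  have pars := tsum_sq_fourierCoeffOn (zero_lt_one (α := ℝ)) hL2
  simp only [hHn] at pars
  have : ∃ k, fourierCoeffOn (zero_lt_one (α := ℝ)) H k ≠ 0 := by
    by_contra hc
    push Not at hc
    simp [hc] at pars
  obtain ⟨k, hk⟩ := this
  rw [fourierCoeffOn_eq_integral] at hk
  set P : ℝ → ℂ := fun x => (fourier (-k)) (x : AddCircle ((1:ℝ) - 0)) • H x with hP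
  have hPe : ∀ x, P x = Complex.exp (-(2 * Real.pi * Complex.I * (θ + k * ε))) * P (x - ε) := by
    intro x
    simp only [hP, hHe x, smul_eq_mul]
    rw [fourier_coe_apply, fourier_coe_apply]
    have : Complex.exp (2 * Real.pi * Complex.I * ((-k : ℤ) : ℂ) * x / ((1 - 0 : ℝ) : ℂ)) * Complex.exp (-(2 * Real.pi * Complex.I * θ))
      = Complex.exp (-(2 * Real.pi * Complex.I * (θ + k * ε))) * Complex.exp (2 * Real.pi * Complex.I * ((-k : ℤ) : ℂ) * ((x - ε : ℝ) : ℂ) / ((1 - 0 : ℝ) : ℂ)) := by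
      rw [← Complex.exp_add, ← Complex.exp_add]
      congr 1; push_cast; ring
    rw [← mul_assoc, this, mul_assoc]
  have hPp : Function.Periodic P 1 := by
    intro x
    simp only [hP, hHp x]
    congr 2
    have h2 : ((1 : ℝ) : AddCircle ((1:ℝ) - 0)) = 0 :=
      (congrArg (fun t : ℝ => (t : AddCircle ((1:ℝ) - 0))) (sub_zero (1:ℝ)).symm).trans
        (AddCircle.coe_period ((1:ℝ) - 0))
    rw [AddCircle.coe_add, h2, add_zero]
  have hPint : ∫ x in (0:ℝ)..1, P x ≠ 0 := by
    intro h; apply hk; rw [h]; simp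
  have hw : ∫ x in (0:ℝ)..1, P x = Complex.exp (-(2 * Real.pi * Complex.I * (θ + k * ε))) * ∫ x in (0:ℝ)..1, P x := by
    conv_lhs => 
      rw [show P = fun x => Complex.exp (-(2 * Real.pi * Complex.I * (θ + k * ε))) * P (x - ε) from funext hPe]
    rw [intervalIntegral.integral_const_mul, shift hPp]
  have hone : Complex.exp (-(2 * Real.pi * Complex.I * (θ + k * ε))) = 1 := by
    have := mul_right_cancel₀ hPint ((one_mul _).trans hw)
    exact this.symm
  rw [Complex.exp_eq_one_iff] at hone
  obtain ⟨n, hn⟩ := hone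
  have hpi : (2 * Real.pi * Complex.I : ℂ) ≠ 0 := Complex.two_pi_I_ne_zero
  have hn' : -((θ : ℂ) + k * ε) = n := by
    apply mul_right_cancel₀ hpi
    rw [← hn]; ring
  have hn2 : -(θ + k * ε) = n := by exact_mod_cast hn'
  refine ⟨1 + n, k, ?_⟩
  push_cast; linarith


lemma vl_abs {ε l c : ℝ} (hp : Par ε l c) (n : ℕ) : |vl ε (orb ε l c n)| ≤ 1 := by
  have := orb_mem hp n
  have := hp.l1; have := hp.c0; have := hp.cl
  rw [abs_le]; constructor <;> linarith

lemma bdd_lin {ε l c : ℝ} (hp : Par ε l c) {α β B : ℝ}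
    (hB : ∀ n, |(orb ε l c n).1 * α + (orb ε l c n).2 * β| ≤ B) : α * ε + β * (1 - ε) = 0 := by
  by_contra hD
  set D := α * ε + β * (1 - ε) with hDdef
  have hDp : 0 < |D| := abs_pos.2 hD
  obtain ⟨n, hn⟩ := exists_nat_gt ((B + |α - β|) / |D|)
  rw [div_lt_iff₀ hDp] at hn
  have h1 := gg_orb_ge (g0 := 1) (g1 := 1) ε l c one_pos one_pos n
  simp only [min_self, mul_one, gg] at h1
  have h2 := hB n
  have h3 := vl_abs hp n
  set i : ℝ := ((orb ε l c n).1 : ℝ)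
  set j : ℝ := ((orb ε l c n).2 : ℝ)
  set y := vl ε (orb ε l c n) with hy
  have hy' : y = i * (1 - ε) - j * ε := hy
  have e : (i + j) * D = (i * α + j * β) - (α - β) * y := by
    rw [hy', hDdef]; ring
  have h4 : |(i + j) * D| ≤ B + |α - β| := by
    rw [e]
    calc _ ≤ |i * α + j * β| + |(α - β) * y| := abs_sub _ _
      _ ≤ B + |α - β| := by
        rw [abs_mul]
        nlinarith [abs_nonneg (α - β)]
  rw [abs_mul, abs_of_nonneg (by linarith [(Nat.cast_nonneg n : (0:ℝ) ≤ n)])] at h4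
  nlinarith

/-- The endomorphism with prescribed values on the basis. -/
def mkM (E0 E1 : ℤ × ℤ) : ℤ × ℤ →+ ℤ × ℤ where
  toFun z := z.1 • E0 + z.2 • E1
  map_zero' := by simp
  map_add' x y := by simp only [Prod.fst_add, Prod.snd_add, add_smul]; abel

lemma vl_mkM (ε : ℝ) (E0 E1 z : ℤ × ℤ) : vl ε (mkM E0 E1 z) = z.1 * vl ε E0 + z.2 * vl ε E1 := by
  simp [mkM, vl]; ring

lemma matrix_gen {ε l c : ℝ} (hp : Par ε l c) {k : ℕ → ℕ} (h0 : k 0 = 0) {E0 E1 : ℤ × ℤ}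
    (hE : ∀ n, orb ε l c (k (n + 1)) = orb ε l c (k n) + mkM E0 E1 (ds ε l c n)) :
    ∃ (M : ℤ × ℤ →+ ℤ × ℤ) (lam : ℝ), (∀ n, orb ε l c (k n) = M (orb ε l c n)) ∧
      ∀ z, vl ε (M z) = lam * vl ε z := by
  have hM : ∀ n, orb ε l c (k n) = mkM E0 E1 (orb ε l c n) := by
    intro n
    induction n with
    | zero => rw [h0]; simp [orb]
    | succ n ih => rw [hE, ih, orb_succ, map_add]
  have hD : vl ε E0 * ε + vl ε E1 * (1 - ε) = 0 := by
    refine bdd_lin hp (B := 1) fun n => ?_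
    rw [← vl_mkM, ← hM]
    exact vl_abs hp _
  have he : 1 - ε ≠ 0 := by have := hp.e1; intro h; linarith
  refine ⟨mkM E0 E1, vl ε E0 / (1 - ε), hM, fun z => ?_⟩
  rw [vl_mkM]
  have : vl ε E1 = - (vl ε E0 * ε) / (1 - ε) := by
    rw [eq_div_iff he]; linarith
  rw [this]
  simp only [vl]
  field_simp
  ring

lemma occ0 {ε l c : ℝ} (hp : Par ε l c) : ∃ n, ds ε l c n = (1, 0) := by
  obtain ⟨_, _, _, _, _, _, _, _⟩ := id hp
  obtain ⟨n, h1, h2⟩ := orb_dense hp (p := c) (q := c + l - 1 + ε) (by linarith) le_rfl (by linarith)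
  exact ⟨n, by simp [ds, dd, h2]⟩

lemma occ2 {ε l c : ℝ} (hp : Par ε l c) : ∃ n, ds ε l c n = (0, 1) := by
  obtain ⟨_, _, _, _, _, _, _, _⟩ := id hp
  obtain ⟨n, h1, h2⟩ := orb_dense hp (p := c + ε) (q := c + l) (by linarith) (by linarith) le_rfl
  refine ⟨n, ?_⟩
  unfold ds dd
  rw [if_neg (by linarith), if_neg (by linarith)]

lemma occ1 {ε l c : ℝ} (hp : Par ε l c) (hl : l < 1) : ∃ n, ds ε l c n = (1, 1) := by
  obtain ⟨_, _, _, _, _, _, _, _⟩ := id hp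
  obtain ⟨n, h1, h2⟩ := orb_dense hp (p := c + l - 1 + ε) (q := c + ε) (by linarith) (by linarith) (by linarith)
  refine ⟨n, ?_⟩
  unfold ds dd
  rw [if_neg (by linarith), if_pos h2]

lemma SS_full {ε l c : ℝ} {k : ℕ → ℕ} (h : SS (ds ε l c) k) {n m : ℕ} (hnm : ds ε l c n = ds ε l c m) :
    orb ε l c (k (n + 1)) = orb ε l c (k n) + (orb ε l c (k (m + 1)) - orb ε l c (k m)) := by
  have h1 := SS_block h hnm (k (n + 1) - k n) le_rfl
  have h2 := (h.2.2 n m hnm).1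
  have h3 := h.2.1 (Nat.lt_succ_self n)
  have h4 := h.2.1 (Nat.lt_succ_self m)
  simp only [Nat.succ_eq_add_one] at h3 h4
  rw [show k n + (k (n + 1) - k n) = k (n + 1) by omega,
    show k m + (k (n + 1) - k n) = k (m + 1) by omega] at h1
  rw [← h1]; abel

lemma matrix2 {ε c : ℝ} (hp : Par ε 1 c) {k : ℕ → ℕ} (hk : SS (ds ε 1 c) k) :
    ∃ (M : ℤ × ℤ →+ ℤ × ℤ) (lam : ℝ), (∀ n, orb ε 1 c (k n) = M (orb ε 1 c n)) ∧
      ∀ z, vl ε (M z) = lam * vl ε z := by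
  obtain ⟨n0, hn0⟩ := occ0 hp
  obtain ⟨n2, hn2⟩ := occ2 hp
  refine matrix_gen hp hk.1 (E0 := orb ε 1 c (k (n0 + 1)) - orb ε 1 c (k n0))
    (E1 := orb ε 1 c (k (n2 + 1)) - orb ε 1 c (k n2)) fun n => ?_
  have : ds ε 1 c n = (1, 0) ∨ ds ε 1 c n = (0, 1) := by
    rw [ds_e2]
    generalize w2 ε c n = a
    fin_cases a <;> simp [e2]
  rcases this with h | h
  · rw [SS_full hk (h.trans hn0.symm), h]; simp [mkM]
  · rw [SS_full hk (h.trans hn2.symm), h]; simp [mkM]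

lemma chi_zero {ε l c : ℝ} (hp : Par ε l c) (n : ℕ) : chi l (-c - kk ε l c n * ε) = 0 := by
  obtain ⟨_, _, _, _, _, _, _, _⟩ := id hp
  have hm := orb_mem hp n
  have hk : (kk ε l c n : ℝ) = (orb ε l c n).1 + (orb ε l c n).2 := by
    have := kk_cast ε l c n
    exact_mod_cast this
  have e : -c - kk ε l c n * ε = (vl ε (orb ε l c n) - c) + ((-(orb ε l c n).1 : ℤ) : ℝ) := by
    rw [hk]; simp [vl]; ring
  rw [e, chi_per]
  have : Int.fract (vl ε (orb ε l c n) - c) = vl ε (orb ε l c n) - c :=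
    Int.fract_eq_self.2 ⟨by linarith, by linarith⟩
  unfold chi
  rw [this, if_neg (by linarith)]

lemma chi_one {ε l c : ℝ} (hp : Par ε l c) (n : ℕ) (h1 : c + l - 1 + ε ≤ vl ε (orb ε l c n))
    (h2 : vl ε (orb ε l c n) < c + ε) : chi l (-c - (kk ε l c n + 1 : ℕ) * ε) = 1 := by
  obtain ⟨_, _, _, _, _, _, _, _⟩ := id hp
  have hm := orb_mem hp n
  have hk : (kk ε l c n : ℝ) = (orb ε l c n).1 + (orb ε l c n).2 := by
    have := kk_cast ε l c n
    exact_mod_cast this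
  have e : -c - (kk ε l c n + 1 : ℕ) * ε = (vl ε (orb ε l c n) - c - ε + 1) + ((-(orb ε l c n).1 - 1 : ℤ) : ℝ) := by
    push_cast
    rw [hk]; simp [vl]; ring
  rw [e, chi_per]
  have : Int.fract (vl ε (orb ε l c n) - c - ε + 1) = vl ε (orb ε l c n) - c - ε + 1 :=
    Int.fract_eq_self.2 ⟨by linarith, by linarith⟩
  unfold chi
  rw [this, if_pos (by linarith)]

lemma kk_cover (ε l c : ℝ) (m : ℕ) : ∃ n, m = kk ε l c n ∨ m = kk ε l c n + 1 := by
  induction m with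
  | zero => exact ⟨0, by simp [kk, orb]⟩
  | succ m ih =>
    obtain ⟨n, h | h⟩ := ih
    · exact ⟨n, by omega⟩
    · have := kk_succ ε l c n
      split_ifs at this
      · exact ⟨n + 1, by omega⟩
      · exact ⟨n + 1, by omega⟩

lemma matrix3 {ε l c : ℝ} (hp : Par ε l c) (hl : l < 1) (hnd : l ∉ Zbr ε) {k : ℕ → ℕ}
    (hk : SS (ds ε l c) k) :
    ∃ (M : ℤ × ℤ →+ ℤ × ℤ) (lam : ℝ), (∀ n, orb ε l c (k n) = M (orb ε l c n)) ∧
      ∀ z, vl ε (M z) = lam * vl ε z := by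
  obtain ⟨n0, hn0⟩ := occ0 hp
  obtain ⟨n1, hn1⟩ := occ1 hp hl
  obtain ⟨n2, hn2⟩ := occ2 hp
  set E0 := orb ε l c (k (n0 + 1)) - orb ε l c (k n0)
  set E1 := orb ε l c (k (n1 + 1)) - orb ε l c (k n1)
  set E2 := orb ε l c (k (n2 + 1)) - orb ε l c (k n2)
  have hstep : ∀ n, (ds ε l c n = (1, 0) ∧ orb ε l c (k (n + 1)) = orb ε l c (k n) + E0 ∧ threeIetWordN ε l c n = 0) ∨
      (ds ε l c n = (1, 1) ∧ orb ε l c (k (n + 1)) = orb ε l c (k n) + E1 ∧ threeIetWordN ε l c n = 1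
        ∧ c + l - 1 + ε ≤ vl ε (orb ε l c n) ∧ vl ε (orb ε l c n) < c + ε) ∨
      (ds ε l c n = (0, 1) ∧ orb ε l c (k (n + 1)) = orb ε l c (k n) + E2 ∧ threeIetWordN ε l c n = 2) := by
    intro n
    have hd := ds_e3 ε l c n
    rcases letter_cases ε l c n with h | h | h
    · rw [h.1] at hd
      exact Or.inl ⟨hd, SS_full hk (hd.trans hn0.symm), h.1⟩
    · rw [h.1] at hd
      exact Or.inr (Or.inl ⟨hd, SS_full hk (hd.trans hn1.symm), h.1, h.2⟩)
    · rw [h.1] at hd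
      exact Or.inr (Or.inr ⟨hd, SS_full hk (hd.trans hn2.symm), h.1⟩)
  have hE : vl ε E1 = vl ε E0 + vl ε E2 := by
    by_contra hne
    set t := vl ε E1 - vl ε E0 - vl ε E2 with ht
    have ht0 : t ≠ 0 := by intro h; apply hne; linarith
    set V : ℕ → ℝ := fun m => ∑ j ∈ Finset.range m, chi l (-c - j * ε) with hV
    have key : ∀ n, vl ε (orb ε l c (k n)) = (orb ε l c n).1 * vl ε E0 + (orb ε l c n).2 * vl ε E2
        + t * V (kk ε l c n) := by
      intro n
      induction n with
      | zero => simp [hk.1, orb, kk, V, vl_zero]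
      | succ n ih =>
        have hs := kk_succ ε l c n
        have c0 := chi_zero hp n
        rcases hstep n with h | h | h
        · rw [h.2.1, vl_add, ih, orb_succ, h.1, hs, h.2.2]
          simp only [V]
          rw [if_neg (by decide), Finset.sum_range_succ, c0]
          push_cast; simp; ring
        · have c1 := chi_one hp n h.2.2.2.1 h.2.2.2.2
          rw [h.2.1, vl_add, ih, orb_succ, h.1, hs, h.2.2.1]
          simp only [V]
          rw [if_pos trivial, Finset.sum_range_succ, Finset.sum_range_succ, c0, c1, ht]
          push_cast; simp; ring
        · rw [h.2.1, vl_add, ih, orb_succ, h.1, hs, h.2.2]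
          simp only [V]
          rw [if_neg (by decide), Finset.sum_range_succ, c0]
          push_cast; simp; ring
    set θ := - (vl ε E0 * ε + vl ε E2 * (1 - ε)) / t with hθ
    have hθt : t * θ = - (vl ε E0 * ε + vl ε E2 * (1 - ε)) := by rw [hθ]; field_simp
    have hdisc : ∀ m, disc ε l θ m (-c) = V m - m * θ := by
      intro m
      simp [disc, V, Finset.sum_sub_distrib]
    have b1 : ∀ n, |disc ε l θ (kk ε l c n) (-c)| ≤ (1 + |vl ε E0 - vl ε E2|) / |t| := by
      intro n
      rw [le_div_iff₀ (abs_pos.2 ht0), ← abs_mul, hdisc]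
      have hkc : (kk ε l c n : ℝ) = (orb ε l c n).1 + (orb ε l c n).2 := by
        have := kk_cast ε l c n
        exact_mod_cast this
      have e : (V (kk ε l c n) - kk ε l c n * θ) * t
          = vl ε (orb ε l c (k n)) - (vl ε E0 - vl ε E2) * vl ε (orb ε l c n) := by
        rw [sub_mul, mul_assoc, mul_comm θ, hθt, key n, hkc]
        have : vl ε (orb ε l c n) = (orb ε l c n).1 * (1 - ε) - (orb ε l c n).2 * ε := rfl
        rw [this]; ring
      rw [e]
      refine (abs_sub _ _).trans ?_
      rw [abs_mul]
      have h1 := vl_abs hp (k n)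
      have h2 := vl_abs hp n
      nlinarith [abs_nonneg (vl ε E0 - vl ε E2)]
    refine hnd (kesten (θ := θ) (x0 := -c) (B := (1 + |vl ε E0 - vl ε E2|) / |t| + (1 + |θ|)) hp.irr hp.e0 hp.e1 (hp.e0.trans hp.le) hl ?_)
    intro m
    obtain ⟨n, h | h⟩ := kk_cover ε l c m
    · rw [h]; linarith [b1 n, abs_nonneg θ]
    · rw [h, disc, Finset.sum_range_succ]
      refine (abs_add_le _ _).trans (add_le_add (b1 n) ?_)
      rw [chi_zero hp]
      simp
  have hE' : E1 = E0 + E2 := vl_inj hp.irr (by rw [hE, vl_add])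
  refine matrix_gen hp hk.1 (E0 := E0) (E1 := E2) fun n => ?_
  rcases hstep n with h | h | h
  · rw [h.2.1, h.1]; simp [mkM]
  · rw [h.2.1, h.1, hE']; simp [mkM]
  · rw [h.2.1, h.1]; simp [mkM]

lemma orb_le {ε l c : ℝ} {a b : ℕ} (hab : a ≤ b) : (orb ε l c a).1 ≤ (orb ε l c b).1 ∧ (orb ε l c a).2 ≤ (orb ε l c b).2 := by
  induction b, hab using Nat.le_induction with
  | base => simp
  | succ b _ ih =>
    have : 0 ≤ (ds ε l c b).1 ∧ 0 ≤ (ds ε l c b).2 := by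
      unfold ds dd; split_ifs <;> simp
    rw [orb_succ]
    simp only [Prod.fst_add, Prod.snd_add]; omega

/-- entries of the matrix -/
lemma entries {ε l c lam : ℝ} (hp : Par ε l c) {k : ℕ → ℕ} (hk : SS (ds ε l c) k) {M : ℤ × ℤ →+ ℤ × ℤ}
    (hM : ∀ n, orb ε l c (k n) = M (orb ε l c n)) (hv : ∀ z, vl ε (M z) = lam * vl ε z) :
    ∃ a b m n : ℤ, 0 ≤ a ∧ 0 ≤ b ∧ 0 ≤ m ∧ 0 ≤ n ∧ 0 < a + b ∧ 0 < m + n ∧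
      M (1, 0) = (a, b) ∧ M (0, 1) = (m, n) ∧ (b : ℝ) * ε = (a - lam) * (1 - ε) ∧
      (m : ℝ) * (1 - ε) = (n - lam) * ε := by
  obtain ⟨n0, hn0⟩ := occ0 hp
  obtain ⟨n2, hn2⟩ := occ2 hp
  have h1 : ∀ n, M (ds ε l c n) = orb ε l c (k (n + 1)) - orb ε l c (k n) := by
    intro n; rw [hM, hM, orb_succ, map_add]; abel
  have h2 : ∀ n, 0 ≤ (M (ds ε l c n)).1 ∧ 0 ≤ (M (ds ε l c n)).2 ∧ 0 < (M (ds ε l c n)).1 + (M (ds ε l c n)).2 := by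
    intro n
    have hlt := hk.2.1 (Nat.lt_succ_self n)
    have := gg_orb_mono (g0 := 1) (g1 := 1) ε l c one_pos one_pos hlt
    simp only [gg, mul_one] at this
    have h3 := orb_le (ε := ε) (l := l) (c := c) hlt.le
    simp only [Nat.succ_eq_add_one] at this h3
    have h4 : (orb ε l c (k n)).1 + (orb ε l c (k n)).2 < (orb ε l c (k (n+1))).1 + (orb ε l c (k (n+1))).2 := by
      exact_mod_cast this
    rw [h1]
    simp only [Prod.fst_sub, Prod.snd_sub]; omega
  have a0 := h2 n0
  have a2 := h2 n2
  rw [hn0] at a0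
  rw [hn2] at a2
  have v0 := hv (1, 0)
  have v2 := hv (0, 1)
  refine ⟨(M (1, 0)).1, (M (1, 0)).2, (M (0, 1)).1, (M (0, 1)).2, a0.1, a0.2.1, a2.1, a2.2.1, a0.2.2, a2.2.2, rfl, rfl, ?_, ?_⟩
  · simp only [vl] at v0; push_cast at v0; linarith
  · simp only [vl] at v2; push_cast at v2; linarith

lemma hom_apply (M : ℤ × ℤ →+ ℤ × ℤ) (z : ℤ × ℤ) : M z = z.1 • M (1, 0) + z.2 • M (0, 1) := by
  rw [← map_zsmul, ← map_zsmul, ← map_add]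
  congr 1
  ext <;> simp

lemma vl_one_ne {ε l c : ℝ} (hp : Par ε l c) : vl ε (orb ε l c 1) ≠ 0 := by
  intro h
  have := vl_inj hp.irr (h.trans (vl_zero ε).symm)
  have h2 : orb ε l c 1 = orb ε l c 0 := this
  exact absurd (orb_inj h2) (by norm_num)

lemma int_case {ε : ℝ} (h : Irrational ε) {a b t : ℤ} (hh : (b : ℝ) * ε = (a - t) * (1 - ε)) : a = t ∧ b = 0 := by
  have := irr_lin h (a := a - t) (b := -(a - t) - b) (by push_cast; linarith)
  omega

lemma lam_bound {ε l c lam : ℝ} (hp : Par ε l c) {k : ℕ → ℕ} (hk : SS (ds ε l c) k) {M : ℤ × ℤ →+ ℤ × ℤ}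
    (hM : ∀ n, orb ε l c (k n) = M (orb ε l c n)) (hv : ∀ z, vl ε (M z) = lam * vl ε z)
    (hne : ∃ n, k n ≠ n) : lam ≠ 0 ∧ |lam| < 1 := by
  have hle : |lam| ≤ 1 := by
    by_contra hgt
    push Not at hgt
    have hy := abs_pos.2 (vl_one_ne hp)
    obtain ⟨p, hp1⟩ := pow_unbounded_of_one_lt (1 / |vl ε (orb ε l c 1)|) hgt
    obtain ⟨k', _, h2⟩ := SS_pow hk hM p
    have h3 := vl_abs hp (k' 1)
    rw [h2, hv_pow hv, abs_mul, abs_pow] at h3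
    rw [div_lt_iff₀ hy] at hp1
    linarith
  obtain ⟨a, b, m, n, ha, hb, hm, hn, hab, hmn, e1, e2, r1, r2⟩ := entries hp hk hM hv
  have noint : ∀ t : ℤ, lam = t → False := by
    intro t ht
    rw [ht] at r1 r2 hle
    obtain ⟨rfl, rfl⟩ := int_case hp.irr r1
    have := irr_lin hp.irr (a := m) (b := -m - n + a) (by push_cast; linarith)
    have hle' : |a| ≤ 1 := by exact_mod_cast hle
    have ha1 : a = 1 := by rw [abs_le] at hle'; omega
    have hid : M = AddMonoidHom.id _ := by
      refine hom_unique (lam := lam) hp.irr hv fun z => ?_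
      rw [ht, ha1]; simp
    obtain ⟨n', hn'⟩ := hne
    apply hn'
    apply orb_inj (ε := ε) (l := l) (c := c)
    rw [hM, hid]; rfl
  refine ⟨fun h => noint 0 (by simp [h]), lt_of_le_of_ne hle fun h => ?_⟩
  rcases (abs_eq one_pos.le).1 h with h | h
  · exact noint 1 (by simp [h])
  · exact noint (-1) (by simp [h])

lemma adm_of {ε l c lam : ℝ} (hp : Par ε l c) {k : ℕ → ℕ} (hk : SS (ds ε l c) k) {M : ℤ × ℤ →+ ℤ × ℤ}
    (hM : ∀ n, orb ε l c (k n) = M (orb ε l c n)) (hv : ∀ z, vl ε (M z) = lam * vl ε z)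
    (h0 : 0 < lam) (h1 : lam < 1) : ∃ Lam g0 g1, Adm ε lam Lam g0 g1 M := by
  obtain ⟨a, b, m, n, ha, hb, hm, hn, hab, hmn, e1, e2, r1, r2⟩ := entries hp hk hM hv
  have he0 := hp.e0
  have he1 : 0 < 1 - ε := by linarith [hp.e1]
  have noint : ∀ t : ℤ, lam = t → False := by
    intro t ht
    rw [ht] at h0 h1
    have : 0 < t := by exact_mod_cast h0
    have : t < 1 := by exact_mod_cast h1
    omega
  have hb' : 0 < b := by
    rcases hb.lt_or_eq with h | h
    · exact h
    · exfalso
      rw [← h] at r1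
      simp only [Int.cast_zero, zero_mul, zero_eq_mul] at r1
      rcases r1 with h | h
      · exact noint a (by linarith)
      · linarith
  have hm' : 0 < m := by
    rcases hm.lt_or_eq with h | h
    · exact h
    · exfalso
      rw [← h] at r2
      simp only [Int.cast_zero, zero_mul, zero_eq_mul] at r2
      rcases r2 with h | h
      · exact noint n (by linarith)
      · linarith
  have hbR : (0 : ℝ) < b := by exact_mod_cast hb'
  have hmR : (0 : ℝ) < m := by exact_mod_cast hm'
  have ha2 : 0 < (a : ℝ) - lam := by
    by_contra hc; push Not at hc
    nlinarith [mul_pos hbR he0]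
  have hn2 : 0 < (n : ℝ) - lam := by
    by_contra hc; push Not at hc
    nlinarith [mul_pos hmR he1]
  have hmb : (m : ℝ) * b = (a - lam) * (n - lam) := by
    have : ((m : ℝ) * b) * (ε * (1 - ε)) = ((a - lam) * (n - lam)) * (ε * (1 - ε)) := by
      calc _ = (b * ε) * (m * (1 - ε)) := by ring
        _ = _ := by rw [r1, r2]; ring
    exact mul_right_cancel₀ (mul_pos he0 he1).ne' this
  refine ⟨a + n - lam, b, n - lam, hv, ?_, h0, h1, by linarith [(by exact_mod_cast ha : (0:ℝ) ≤ a)], hbR, hn2, ?_⟩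
  · intro z
    rw [hom_apply M z, e1, e2]
    simp only [gg]
    simp
    linear_combination (z.2 : ℝ) * hmb
  · intro z hz
    simp only [gg] at hz
    have h2 : ((z.2 * m : ℤ) : ℝ) + ((z.1 * b - z.2 * m : ℤ) : ℝ) * ε = 0 := by
      push_cast
      linear_combination ε * hz + (z.2 : ℝ) * r2
    obtain ⟨q1, q2⟩ := irr_lin hp.irr h2
    have z2 : z.2 = 0 := by
      rcases mul_eq_zero.1 q1 with h | h
      · exact h
      · omega
    have z1 : z.1 = 0 := by
      rw [z2] at q2
      simp at q2
      rcases q2 with h | h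
      · exact h
      · omega
    exact Prod.ext z1 z2

/-- conclusion of the matrix analysis -/
lemma adm_exists {ε l c lam : ℝ} (hp : Par ε l c) {k : ℕ → ℕ} (hk : SS (ds ε l c) k) {M : ℤ × ℤ →+ ℤ × ℤ}
    (hM : ∀ n, orb ε l c (k n) = M (orb ε l c n)) (hv : ∀ z, vl ε (M z) = lam * vl ε z)
    (hne : ∃ n, k n ≠ n) : ∃ (k' : ℕ → ℕ) (M' : ℤ × ℤ →+ ℤ × ℤ) (lam' Lam' g0 g1 : ℝ),
      SS (ds ε l c) k' ∧ (∀ n, orb ε l c (k' n) = M' (orb ε l c n)) ∧ Adm ε lam' Lam' g0 g1 M' := by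
  obtain ⟨h1, h2⟩ := lam_bound hp hk hM hv hne
  obtain ⟨k', h3, h4⟩ := SS_pow hk hM 2
  have hv' := hv_pow hv 2
  obtain ⟨L, g0, g1, h⟩ := adm_of hp h3 h4 hv' (by positivity) (by rw [← sq_abs]; exact pow_lt_one₀ (abs_nonneg _) h2 two_ne_zero)
  exact ⟨k', _, _, L, g0, g1, h3, h4, h⟩


/-- Membership in the lattice of values. -/
def InL (ε x : ℝ) : Prop := ∃ w : ℤ × ℤ, x = vl ε w

lemma InL.add {ε x y : ℝ} (h : InL ε x) (h' : InL ε y) : InL ε (x + y) := by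
  obtain ⟨w, rfl⟩ := h; obtain ⟨w', rfl⟩ := h'; exact ⟨w + w', (vl_add _ _ _).symm⟩
lemma InL.neg {ε x : ℝ} (h : InL ε x) : InL ε (-x) := by
  obtain ⟨w, rfl⟩ := h; exact ⟨-w, (vl_neg _ _).symm⟩
lemma InL.sub {ε x y : ℝ} (h : InL ε x) (h' : InL ε y) : InL ε (x - y) := by
  rw [sub_eq_add_neg]; exact h.add h'.neg
lemma InL.zbr {ε x : ℝ} (h : InL ε x) : x ∈ Zbr ε := by
  obtain ⟨w, rfl⟩ := h
  exact ⟨w.1, -(w.1 + w.2), by simp only [vl]; push_cast; ring⟩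
lemma InL.vl (ε : ℝ) (w : ℤ × ℤ) : InL ε (vl ε w) := ⟨w, rfl⟩
lemma InL.congr {ε x y : ℝ} (h : InL ε x) (e : y = x) : InL ε y := e ▸ h
lemma Adm.inL {ε lam Lam g0 g1 x : ℝ} {M : ℤ × ℤ →+ ℤ × ℤ} (ha : Adm ε lam Lam g0 g1 M) (h : InL ε x) :
    InL ε (lam * x) := by
  obtain ⟨w, rfl⟩ := h; exact ⟨M w, (ha.hv w).symm⟩

/-- invariance of the lattice, three interval case -/
lemma invL3 {ε l c lam Lam g0 g1 : ℝ} {M : ℤ × ℤ →+ ℤ × ℤ} (hp : Par ε l c)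
    (ha : Adm ε lam Lam g0 g1 M) (hC : Cnd ε l c lam Lam g0 g1 c) (hC' : Cnd ε l c lam Lam g0 g1 (c + l))
    (hnd : ¬ InL ε l) (x : ℝ) (hx : InL ε (lam * x)) : InL ε x := by
  have hl0 := ha.l0
  have co : ∀ A, (A = c ∨ A = c + l) → ∀ q, InL ε (A - lam * q) → InL ε (q - c) ∨ InL ε (q - (c + l)) := by
    intro A hA q ⟨p, hq⟩
    have hCA : Cnd ε l c lam Lam g0 g1 A := by rcases hA with rfl | rfl <;> assumption
    obtain ⟨w, h | h⟩ := coset hp ha hA hCA p q (by linarith)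
    · exact Or.inl ⟨-w, by rw [vl_neg]; linarith⟩
    · exact Or.inr ⟨-w, by rw [vl_neg]; linarith⟩
  by_contra hnx
  have hL0 : InL ε 0 := ⟨0, (vl_zero ε).symm⟩
  have q0 := co c (Or.inl rfl) (c / lam) (hL0.congr (by field_simp; ring))
  have q1 := co c (Or.inl rfl) (c / lam - x) (hx.congr (by field_simp; ring))
  have q2 := co (c + l) (Or.inr rfl) ((c + l) / lam) (hL0.congr (by field_simp; ring))
  -- lam * l ∈ L
  have hll : InL ε (lam * l) := by
    rcases q0 with h0 | h0 <;> rcases q1 with h1 | h1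
    · exact absurd ((h0.sub h1).congr (by ring)) hnx
    · exact ((ha.inL (h0.sub h1)).sub hx).congr (by ring)
    · exact ((ha.inL (h1.sub h0)).add hx).congr (by ring)
    · exact absurd ((h0.sub h1).congr (by ring)) hnx
  have hne := hl0.ne'
  apply hnd
  rcases q0 with h0 | h0 <;> rcases q2 with h2 | h2
  · exact (ha.inL (h2.sub h0)).congr (by field_simp; ring)
  · exact ((ha.inL (h2.sub h0)).add hll).congr (by field_simp; ring)
  · exact ((ha.inL (h2.sub h0)).sub hll).congr (by field_simp; ring)
  · exact (ha.inL (h2.sub h0)).congr (by field_simp; ring)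

/-- preimages of the two endpoints under the squared scaling -/
lemma EE3 {ε l c lam Lam g0 g1 : ℝ} {M : ℤ × ℤ →+ ℤ × ℤ} (hp : Par ε l c)
    (ha : Adm ε lam Lam g0 g1 M) (hC : Cnd ε l c lam Lam g0 g1 c) (hC' : Cnd ε l c lam Lam g0 g1 (c + l))
    (hnd : ¬ InL ε l) :
    (∀ y, InL ε (c - lam ^ 2 * y) → InL ε (y - c)) ∧
    (∀ y, InL ε (c + l - lam ^ 2 * y) → InL ε (y - (c + l))) := by
  have hl0 := ha.l0
  have inv := invL3 hp ha hC hC' hnd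
  have co : ∀ A, (A = c ∨ A = c + l) → ∀ q, InL ε (A - lam * q) → InL ε (q - c) ∨ InL ε (q - (c + l)) := by
    intro A hA q ⟨p, hq⟩
    have hCA : Cnd ε l c lam Lam g0 g1 A := by rcases hA with rfl | rfl <;> assumption
    obtain ⟨w, h | h⟩ := coset hp ha hA hCA p q (by linarith)
    · exact Or.inl ⟨-w, by rw [vl_neg]; linarith⟩
    · exact Or.inr ⟨-w, by rw [vl_neg]; linarith⟩
  have hL0 : InL ε 0 := ⟨0, (vl_zero ε).symm⟩
  have sh : ∀ A q, InL ε (A - lam * q) → InL ε (A / lam - q) := by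
    intro A q h
    apply inv
    exact h.congr (by field_simp)
  have q0 := co c (Or.inl rfl) (c / lam) (hL0.congr (by field_simp; ring))
  have q2 := co (c + l) (Or.inr rfl) ((c + l) / lam) (hL0.congr (by field_simp; ring))
  have key : ∀ A B, InL ε (A / lam - B) → InL ε (B / lam - A) → ∀ y, InL ε (A - lam ^ 2 * y) → InL ε (y - A) := by
    intro A B h1 h2 y hy
    have a1 := sh A (lam * y) (hy.congr (by ring))
    have a2 : InL ε (B - lam * y) := (a1.sub h1).congr (by ring)
    have a3 := sh _ _ a2
    exact (h2.sub a3).congr (by ring)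
  have bad : ¬ InL ε (l / lam) := by
    intro h
    exact hnd ((ha.inL h).congr (by field_simp))
  rcases q0 with h0 | h0 <;> rcases q2 with h2 | h2
  · exact absurd ((h2.sub h0).congr (by ring)) bad
  · exact ⟨key c c h0 h0, key (c + l) (c + l) h2 h2⟩
  · exact ⟨key c (c + l) h0 h2, key (c + l) c h2 h0⟩
  · exact absurd ((h2.sub h0).congr (by ring)) bad

lemma dd1_lt {ε c y : ℝ} (h : y < c + ε) : dd ε 1 c y = (1, 0) := by
  unfold dd; rw [if_pos (by linarith)]
lemma dd1_ge {ε c y : ℝ} (h : c + ε ≤ y) : dd ε 1 c y = (0, 1) := by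
  unfold dd; rw [if_neg (by linarith), if_neg (by linarith)]

lemma gg10 (g0 g1 : ℝ) : gg g0 g1 (1, 0) = g0 := by simp [gg]
lemma gg01 (g0 g1 : ℝ) : gg g0 g1 (0, 1) = g1 := by simp [gg]
lemma gg11 (g0 g1 : ℝ) : gg g0 g1 (1, 1) = g0 + g1 := by simp [gg]
lemma vl10 (ε : ℝ) : vl ε (1, 0) = 1 - ε := by simp [vl]
lemma vl01 (ε : ℝ) : vl ε (0, 1) = -ε := by simp [vl]

lemma transfer_left {ε l c lam Lam g0 g1 : ℝ} {M : ℤ × ℤ →+ ℤ × ℤ} (hp : Par ε l c) (hl : l < 1)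
    (ha : Adm ε lam Lam g0 g1 M) (hC : Cnd ε l c lam Lam g0 g1 c)
    (hE : ∀ y, InL ε (c - lam * y) → InL ε (y - c)) (hnd : ¬ InL ε l) :
    Cnd ε 1 c lam Lam g0 g1 c := by
  obtain ⟨_, _, _, _, _, _, _, _⟩ := id hp
  have hL0 := ha.L0
  have hp0 := ha.p0
  have hp1 := ha.p1
  intro y z h1 h2 h3 h4 h5 h6 hA
  have hy := hE y ⟨z, by linarith⟩
  rcases lt_or_gt_of_ne h4 with h | h
  · rw [dd1_lt h, gg10] at h6
    rcases lt_trichotomy y (c + l - 1 + ε) with h7 | h7 | h7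
    · refine hC y z h1 (by linarith) h7.ne h4 h5 ?_ hA
      rw [dd, if_pos h7, gg10]; exact h6
    · apply hnd
      exact (hy.add (InL.vl ε (1, 0))).congr (by rw [vl10, h7]; ring)
    · refine hC y z h1 (by linarith) h7.ne' h4 h5 ?_ hA
      rw [dd, if_neg (by linarith), if_pos h, gg11]; nlinarith
  · rw [dd1_ge h.le, gg01] at h6
    rcases lt_trichotomy y (c + l) with h7 | h7 | h7
    · refine hC y z h1 h7 (by intro h; linarith) h4 h5 ?_ hA
      rw [dd, if_neg (by linarith), if_neg (by linarith), gg01]; exact h6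
    · apply hnd
      exact hy.congr (by rw [h7]; ring)
    · refine hC (y - (1 - ε)) (z + M (1, 0)) (by linarith) (by linarith) (by intro h; linarith)
        (by intro h; linarith) ?_ ?_ ?_
      · rw [gg_add, ha.hg, gg10]; nlinarith
      · rw [dd, if_neg (by linarith), if_pos (by linarith), gg11, gg_add, ha.hg, gg10]; nlinarith
      · rw [vl_add, ha.hv, vl10]; linarith

lemma transfer_right {ε l c lam Lam g0 g1 : ℝ} {M : ℤ × ℤ →+ ℤ × ℤ} (hp : Par ε l c) (hl : l < 1)
    (ha : Adm ε lam Lam g0 g1 M) (hC : Cnd ε l c lam Lam g0 g1 (c + l))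
    (hE : ∀ y, InL ε (c + l - lam * y) → InL ε (y - (c + l))) (hnd : ¬ InL ε l) :
    Cnd ε 1 (c + l - 1) lam Lam g0 g1 (c + l - 1 + 1) := by
  obtain ⟨_, _, _, _, _, _, _, _⟩ := id hp
  have hL0 := ha.L0
  have hp0 := ha.p0
  have hp1 := ha.p1
  intro y z h1 h2 h3 h4 h5 h6 hA
  have hA' : lam * y + vl ε z = c + l := by linarith
  have hy := hE y ⟨z, by linarith⟩
  rcases lt_or_gt_of_ne h4 with h | h
  · rw [dd1_lt h, gg10] at h6
    rcases lt_trichotomy y c with h7 | h7 | h7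
    · refine hC (y + ε) (z + M (0, 1)) (by linarith) (by linarith) (by intro h; linarith)
        (by intro h; linarith) ?_ ?_ ?_
      · rw [gg_add, ha.hg, gg01]; nlinarith
      · rw [dd, if_neg (by linarith), if_pos (by linarith), gg11, gg_add, ha.hg, gg01]; nlinarith
      · rw [vl_add, ha.hv, vl01]; linarith
    · apply hnd
      exact hy.neg.congr (by rw [h7]; ring)
    · refine hC y z h7 (by linarith) h4 (by intro h; linarith) h5 ?_ hA'
      rw [dd, if_pos h, gg10]; exact h6
  · rw [dd1_ge h.le, gg01] at h6
    rcases lt_trichotomy y (c + ε) with h7 | h7 | h7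
    · refine hC y z (by linarith) (by linarith) h4 h7.ne h5 ?_ hA'
      rw [dd, if_neg (by linarith), if_pos h7, gg11]; nlinarith
    · apply hnd
      exact (hy.neg.sub (InL.vl ε (0, 1))).congr (by rw [vl01, h7]; ring)
    · refine hC y z (by linarith) (by linarith) h4 h7.ne' h5 ?_ hA'
      rw [dd, if_neg (by linarith), if_neg (by linarith), gg01]; exact h6

lemma right_of_left {ε c lam Lam g0 g1 : ℝ} {M : ℤ × ℤ →+ ℤ × ℤ} (hp : Par ε 1 c)
    (ha : Adm ε lam Lam g0 g1 M) (hC : Cnd ε 1 c lam Lam g0 g1 c) :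
    Cnd ε 1 c lam Lam g0 g1 (c + 1) := by
  obtain ⟨_, _, _, _, _, _, _, _⟩ := id hp
  have hL0 := ha.L0
  have hp0 := ha.p0
  have hp1 := ha.p1
  have hl0 := ha.l0
  have hl1 := ha.l1
  have inside : ∀ x, c < x → x < c + 1 → c < lam * x ∧ lam * x < c + 1 := by
    intro x h1 h2; constructor <;> nlinarith
  intro y z h1 h2 h3 h4 h5 h6 hA
  have hly := inside y h1 h2
  set d := dd ε 1 c y with hd
  have hyd : c < y + vl ε d ∧ y + vl ε d < c + 1 := by
    rcases lt_or_gt_of_ne h4 with h | h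
    · rw [hd, dd1_lt h, vl10]; constructor <;> linarith
    · rw [hd, dd1_ge h.le, vl01]; constructor <;> linarith
  have hlyd := inside _ hyd.1 hyd.2
  -- z1 and z2
  have v1 : lam * y + vl ε (z - (1, 0)) = c + ε := by rw [vl_sub, vl10]; linarith
  have v2 : lam * y + vl ε (z - (1, 0) + (0, 1)) = c := by rw [vl_add, vl01]; linarith
  have w1 : gg g0 g1 (z - (1, 0)) = gg g0 g1 z - g0 := by rw [gg_sub, gg10]
  have w2' : gg g0 g1 (z - (1, 0) + (0, 1)) = gg g0 g1 z - g0 + g1 := by rw [gg_add, w1, gg01]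
  have n1 : 0 ≤ gg g0 g1 z - g0 := by
    by_contra hneg
    push Not at hneg
    by_cases hb : g0 - gg g0 g1 z < g1
    · have := gap hp hp0 hp1 (y := c + ε) (z := -(z - (1, 0))) (by linarith) (by linarith)
        (by rw [vl_neg]; linarith) (by rw [vl_neg]; linarith) (by rw [gg_neg, w1]; linarith)
        (by rw [dd1_ge le_rfl, gg01, gg_neg, w1]; linarith)
      have h0 := gg_zero g0 g1
      rw [← this, gg_neg, w1] at h0
      linarith
    · push Not at hb
      have := gap hp hp0 hp1 (y := c) (z := -(z - (1, 0) + (0, 1))) le_rfl (by linarith)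
        (by rw [vl_neg]; linarith) (by rw [vl_neg]; linarith) (by rw [gg_neg, w2']; linarith)
        (by rw [dd1_lt (by linarith), gg10, gg_neg, w2']; linarith)
      have h0 := vl_zero ε
      rw [← this, vl_neg] at h0
      linarith
  have ge : Lam * gg g0 g1 d ≤ gg g0 g1 (z - (1, 0) + (0, 1)) := by
    by_contra hlt
    push Not at hlt
    exact hC y _ h1 h2 h3 h4 (by rw [w2']; linarith) hlt v2
  rcases ge.lt_or_eq with h | h
  · have := gap hp hp0 hp1 (y := c + ε) (z := M d - (z - (1, 0))) (by linarith) (by linarith)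
      (by rw [vl_sub, ha.hv]; linarith) (by rw [vl_sub, ha.hv]; linarith)
      (by rw [gg_sub, ha.hg, w1]; linarith)
      (by rw [dd1_ge le_rfl, gg01, gg_sub, ha.hg, w1]; linarith)
    have h0 := gg_zero g0 g1
    rw [← this, gg_sub, ha.hg, w1] at h0
    linarith
  · have := ha.inj (M d - (z - (1, 0) + (0, 1))) (by rw [gg_sub, ha.hg, h]; ring)
    have h0 := vl_zero ε
    rw [← this, vl_sub, ha.hv] at h0
    linarith

lemma left_of_right {ε c lam Lam g0 g1 : ℝ} {M : ℤ × ℤ →+ ℤ × ℤ} (hp : Par ε 1 c)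
    (ha : Adm ε lam Lam g0 g1 M) (hC : Cnd ε 1 c lam Lam g0 g1 (c + 1)) :
    Cnd ε 1 c lam Lam g0 g1 c := by
  obtain ⟨_, _, _, _, _, _, _, _⟩ := id hp
  have hL0 := ha.L0
  have hp0 := ha.p0
  have hp1 := ha.p1
  have hl0 := ha.l0
  have hl1 := ha.l1
  have inside : ∀ x, c < x → x < c + 1 → c < lam * x ∧ lam * x < c + 1 := by
    intro x h1 h2; constructor <;> nlinarith
  intro y z h1 h2 h3 h4 h5 h6 hA
  have hly := inside y h1 h2
  set d := dd ε 1 c y with hd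
  have hyd : c < y + vl ε d ∧ y + vl ε d < c + 1 := by
    rcases lt_or_gt_of_ne h4 with h | h
    · rw [hd, dd1_lt h, vl10]; constructor <;> linarith
    · rw [hd, dd1_ge h.le, vl01]; constructor <;> linarith
  have hlyd := inside _ hyd.1 hyd.2
  have v1 : lam * y + vl ε (z - (0, 1)) = c + ε := by rw [vl_sub, vl01]; linarith
  have v2 : lam * y + vl ε (z - (0, 1) + (1, 0)) = c + 1 := by rw [vl_add, vl10]; linarith
  have w1 : gg g0 g1 (z - (0, 1)) = gg g0 g1 z - g1 := by rw [gg_sub, gg01]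
  have w2' : gg g0 g1 (z - (0, 1) + (1, 0)) = gg g0 g1 z - g1 + g0 := by rw [gg_add, w1, gg10]
  have n1 : 0 ≤ gg g0 g1 z - g1 := by
    by_contra hneg
    push Not at hneg
    have := gap hp hp0 hp1 (y := c + ε) (z := -(z - (0, 1))) (by linarith) (by linarith)
      (by rw [vl_neg]; linarith) (by rw [vl_neg]; linarith) (by rw [gg_neg, w1]; linarith)
      (by rw [dd1_ge le_rfl, gg01, gg_neg, w1]; linarith)
    have h0 := gg_zero g0 g1
    rw [← this, gg_neg, w1] at h0
    linarith
  have ge : Lam * gg g0 g1 d ≤ gg g0 g1 (z - (0, 1) + (1, 0)) := by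
    by_contra hlt
    push Not at hlt
    exact hC y _ h1 h2 h3 h4 (by rw [w2']; linarith) hlt v2
  rcases ge.lt_or_eq with h | h
  · by_cases hb : Lam * gg g0 g1 d - (gg g0 g1 z - g1) < g1
    · have := gap hp hp0 hp1 (y := c + ε) (z := M d - (z - (0, 1))) (by linarith) (by linarith)
        (by rw [vl_sub, ha.hv]; linarith) (by rw [vl_sub, ha.hv]; linarith)
        (by rw [gg_sub, ha.hg, w1]; linarith)
        (by rw [dd1_ge le_rfl, gg01, gg_sub, ha.hg, w1]; linarith)
      have h0 := gg_zero g0 g1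
      rw [← this, gg_sub, ha.hg, w1] at h0
      linarith
    · push Not at hb
      have := gap hp hp0 hp1 (y := c) (z := M d - z) le_rfl (by linarith)
        (by rw [vl_sub, ha.hv]; linarith) (by rw [vl_sub, ha.hv]; linarith)
        (by rw [gg_sub, ha.hg]; linarith)
        (by rw [dd1_lt (by linarith), gg10, gg_sub, ha.hg]; linarith)
      have h0 := vl_zero ε
      rw [← this, vl_sub, ha.hv] at h0
      linarith
  · have := ha.inj (M d - (z - (0, 1) + (1, 0))) (by rw [gg_sub, ha.hg, h]; ring)
    have h0 := vl_zero ε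
    rw [← this, vl_sub, ha.hv] at h0
    linarith

lemma sturm_fix {ε c lam Lam g0 g1 : ℝ} {M : ℤ × ℤ →+ ℤ × ℤ} (hp : Par ε 1 c)
    (ha : Adm ε lam Lam g0 g1 M) (hC : Cnd ε 1 c lam Lam g0 g1 c) (hC' : Cnd ε 1 c lam Lam g0 g1 (c + 1)) :
    ∃ ψ : Fin 2 → List (Fin 2), (∀ a, ψ a ≠ []) ∧ (¬ ∀ a, ψ a = [a]) ∧ IsFixedPointSubst ψ (w2 ε c) := by
  obtain ⟨k, hk, hM⟩ := construct hp ha hC hC'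
  have hk2 : SS (w2 ε c) k := SS_congr hk fun n m => by rw [ds_e2, ds_e2]; exact e2_inj.eq_iff
  obtain ⟨ψ, h1, h2, h3⟩ := SS_to_fix hk2
  refine ⟨ψ, h1, fun hid => ?_, h3⟩
  have := h2 0
  rw [hid] at this
  have hlen := congrArg List.length this
  simp [hk.1] at hlen
  have hM1 := hM 1
  rw [← hlen] at hM1
  have h4 := ha.hv (orb ε 1 c 1)
  rw [← hM1] at h4
  have h5 := vl_one_ne hp
  have : (1 - lam) * vl ε (orb ε 1 c 1) = 0 := by linarith
  rcases mul_eq_zero.1 this with h | h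
  · linarith [ha.l1]
  · exact h5 h

lemma forward {ε l c : ℝ} (hp : Par ε l c) (hl : l < 1) (hnd : l ∉ Zbr ε)
    {φ : Fin 3 → List (Fin 3)} (hprim : IsPrimitiveSubst φ)
    (hfix : IsFixedPointSubst φ (threeIetWordN ε l c)) :
    (∃ ψ : Fin 2 → List (Fin 2), (∀ a, ψ a ≠ []) ∧ (¬ ∀ a, ψ a = [a]) ∧ IsFixedPointSubst ψ (w2 ε c)) ∧
    (∃ ψ : Fin 2 → List (Fin 2), (∀ a, ψ a ≠ []) ∧ (¬ ∀ a, ψ a = [a]) ∧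
      IsFixedPointSubst ψ (w2 ε (c + l - 1))) := by
  obtain ⟨k, hm, h0, hs, hl'⟩ := hfix
  have hnd' : ¬ InL ε l := fun h => hnd h.zbr
  have hk : SS (ds ε l c) k := SS_congr (fix_to_SS hm h0 hs hl') fun n m => by
    rw [ds_e3, ds_e3]; exact e3_inj.eq_iff.symm
  have hne : ∃ n, k n ≠ n := by
    by_contra hc
    push Not at hc
    obtain ⟨n0, hn0⟩ := occ0 hp
    have hu : threeIetWordN ε l c n0 = 0 := by
      rw [ds_e3] at hn0
      exact e3_inj (hn0.trans rfl)
    have e1 := hs n0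
    have e2 := hl' n0 0
    rw [hc, hc, hu] at e1
    rw [hc, hu, add_zero, hu] at e2
    have e3 : φ 0 = [0] := by
      have hlen : (φ 0).length = 1 := by omega
      obtain ⟨a, ha⟩ := List.length_eq_one_iff.1 hlen
      have := e2 (by omega)
      simp [ha] at this
      rw [ha, ← this]
    obtain ⟨n, _, hn⟩ := hprim
    have hit : ∀ n, (substWord φ)^[n] [0] = [0] := by
      intro n
      induction n with
      | zero => rfl
      | succ n ih => rw [Function.iterate_succ_apply', ih]; simp [substWord, e3]
    have := hn 0 1
    rw [hit] at this
    simp at this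
  obtain ⟨M, lam, hM, hv⟩ := matrix3 hp hl hnd hk
  obtain ⟨k', M', lam', Lam', g0, g1, hk', hM', ha⟩ := adm_exists hp hk hM hv hne
  obtain ⟨hC, hC'⟩ := extract hp ha hk' hM'
  obtain ⟨hE, hE'⟩ := EE3 hp ha hC hC' hnd'
  obtain ⟨k2, hk2, hM2⟩ := SS_pow hk' hM' 2
  have ha2 := Adm_pow ha two_ne_zero
  obtain ⟨hD, hD'⟩ := extract hp ha2 hk2 hM2
  have tl := transfer_left hp hl ha2 hD hE hnd'
  have tr := transfer_right hp hl ha2 hD' hE' hnd'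
  exact ⟨sturm_fix hp.left ha2 tl (right_of_left hp.left ha2 tl),
    sturm_fix hp.right ha2 (left_of_right hp.right ha2 tr) tr⟩


lemma invL2 {ε c lam Lam g0 g1 : ℝ} {M : ℤ × ℤ →+ ℤ × ℤ} (hp : Par ε 1 c)
    (ha : Adm ε lam Lam g0 g1 M) (hC : Cnd ε 1 c lam Lam g0 g1 c) (x : ℝ) (hx : InL ε (lam * x)) : InL ε x := by
  have hl0 := ha.l0
  have h1 : InL ε 1 := ⟨(1, -1), by simp [vl]⟩
  have co : ∀ q, InL ε (c - lam * q) → InL ε (q - c) := by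
    intro q ⟨p, hq⟩
    obtain ⟨w, h | h⟩ := coset hp ha (Or.inl rfl) hC p q (by linarith)
    · exact ⟨-w, by rw [vl_neg]; linarith⟩
    · exact (h1.sub (InL.vl ε w)).congr (by linarith)
  have hL0 : InL ε 0 := ⟨0, (vl_zero ε).symm⟩
  have q0 := co (c / lam) (hL0.congr (by field_simp; ring))
  have q1 := co (c / lam - x) (hx.congr (by field_simp; ring))
  exact (q0.sub q1).congr (by ring)

/-- Eigenvalues of unimodular integer matrices. -/
def UU (ε x : ℝ) : Prop := 0 < x ∧ ∃ a b m n : ℤ, a * n - b * m = 1 ∧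
  x * (1 - ε) = a * (1 - ε) - b * ε ∧ -x * ε = m * (1 - ε) - n * ε

lemma UU.mul {ε x y : ℝ} (hx : UU ε x) (hy : UU ε y) : UU ε (x * y) := by
  obtain ⟨x0, a, b, m, n, h1, h2, h3⟩ := hx
  obtain ⟨y0, a', b', m', n', h1', h2', h3'⟩ := hy
  refine ⟨mul_pos x0 y0, a' * a + b' * m, a' * b + b' * n, m' * a + n' * m, m' * b + n' * n, ?_, ?_, ?_⟩
  · linear_combination (a' * n' - b' * m') * h1 + h1'
  · push_cast; linear_combination x * h2' + a' * h2 + b' * h3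
  · push_cast; linear_combination x * h3' + m' * h2 + n' * h3

lemma UU.inv {ε x : ℝ} (hx : UU ε x) : UU ε x⁻¹ := by
  obtain ⟨x0, a, b, m, n, h1, h2, h3⟩ := hx
  have h1' : (a : ℝ) * n - b * m = 1 := by exact_mod_cast h1
  refine ⟨inv_pos.2 x0, n, -b, -m, a, by linarith, ?_, ?_⟩
  · apply mul_left_cancel₀ x0.ne'
    rw [← mul_assoc, mul_inv_cancel₀ x0.ne']
    push_cast
    linear_combination -(n : ℝ) * h2 + (b : ℝ) * h3 - (1 - ε) * h1'
  · apply mul_left_cancel₀ x0.ne'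
    rw [← mul_assoc, mul_neg, mul_inv_cancel₀ x0.ne']
    push_cast
    linear_combination (m : ℝ) * h2 - (a : ℝ) * h3 + ε * h1'

lemma UU.pow {ε x : ℝ} (hx : UU ε x) (n : ℕ) : UU ε (x ^ n) := by
  induction n with
  | zero => exact ⟨by simp, 1, 0, 0, 1, by norm_num, by simp, by simp⟩
  | succ n ih => rw [pow_succ]; exact ih.mul hx

lemma UU.trace {ε x : ℝ} (h0 : 0 < ε) (h1 : ε < 1) (hx : UU ε x) : ∃ t : ℤ, x + x⁻¹ = t := by
  obtain ⟨x0, a, b, m, n, e1, e2, e3⟩ := hx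
  have e1' : (a : ℝ) * n - b * m = 1 := by exact_mod_cast e1
  refine ⟨a + n, ?_⟩
  have h : ((a - x) * (n - x) - b * m) * (ε * (1 - ε)) = 0 := by
    have r1 : (a - x) * (1 - ε) = b * ε := by linarith
    have r2 : (n - x) * ε = m * (1 - ε) := by linarith
    calc _ = ((a - x) * (1 - ε)) * ((n - x) * ε) - b * m * (ε * (1 - ε)) := by ring
      _ = 0 := by rw [r1, r2]; ring
  have hne : ε * (1 - ε) ≠ 0 := (mul_pos h0 (by linarith)).ne'
  have h2 := (mul_eq_zero.1 h).resolve_right hne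
  push_cast
  field_simp
  linear_combination h2 - e1'

lemma Adm.unit {ε lam Lam g0 g1 : ℝ} {M : ℤ × ℤ →+ ℤ × ℤ} (h0 : 0 < ε) (h1 : ε < 1) (hirr : Irrational ε)
    (ha : Adm ε lam Lam g0 g1 M) (hinv : ∀ x, InL ε (lam * x) → InL ε x) :
    lam * Lam = 1 ∧ UU ε lam := by
  have hl0 := ha.l0
  obtain ⟨⟨a, b⟩, hab⟩ : ∃ z, M (1, 0) = z := ⟨_, rfl⟩
  obtain ⟨⟨m, n⟩, hmn⟩ : ∃ z, M (0, 1) = z := ⟨_, rfl⟩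
  have v0 := ha.hv (1, 0)
  have v1 := ha.hv (0, 1)
  have u0 := ha.hg (1, 0)
  have u1 := ha.hg (0, 1)
  rw [hab, vl10] at v0
  rw [hmn, vl01] at v1
  rw [hab, gg10] at u0
  rw [hmn, gg01] at u1
  simp only [vl, gg] at v0 v1 u0 u1
  have hW : 0 < (1 - ε) * g1 + ε * g0 := by
    have := mul_pos (sub_pos.2 h1) ha.p1
    have := mul_pos h0 ha.p0
    linarith
  have hdet : (a : ℝ) * n - b * m = lam * Lam := by
    have : ((a : ℝ) * n - b * m - lam * Lam) * ((1 - ε) * g1 + ε * g0) = 0 := by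
      have : ((a : ℝ) * n - b * m) * ((1 - ε) * g1 + ε * g0) =
        (a * (1 - ε) - b * ε) * (m * g0 + n * g1) - (m * (1 - ε) - n * ε) * (a * g0 + b * g1) := by ring
      rw [sub_mul, this, v0, v1, u0, u1]; ring
    have := (mul_eq_zero.1 this).resolve_right hW.ne'
    linarith
  -- surjectivity
  have surj : ∀ z : ℤ × ℤ, ∃ w, M w = z := by
    intro z
    obtain ⟨w, hw⟩ := hinv (vl ε z / lam) (⟨z, by field_simp⟩)
    refine ⟨w, vl_inj hirr ?_⟩
    rw [ha.hv, ← hw]; field_simp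
  obtain ⟨w, hw⟩ := surj (1, 0)
  obtain ⟨w', hw'⟩ := surj (0, 1)
  rw [hom_apply M, hab, hmn] at hw hw'
  simp only [Prod.smul_mk, smul_eq_mul, Prod.mk_add_mk, Prod.mk.injEq] at hw hw'
  have hdd : (w.1 * w'.2 - w.2 * w'.1) * (a * n - b * m) = 1 := by
    obtain ⟨p1, p2⟩ := hw
    obtain ⟨q1, q2⟩ := hw'
    calc (w.1 * w'.2 - w.2 * w'.1) * (a * n - b * m)
        = (w.1 * a + w.2 * m) * (w'.1 * b + w'.2 * n) - (w.1 * b + w.2 * n) * (w'.1 * a + w'.2 * m) := by ring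
      _ = 1 := by rw [p1, p2, q1, q2]; ring
  have hpos : (0 : ℝ) < ((a * n - b * m : ℤ) : ℝ) := by
    push_cast; rw [hdet]; exact mul_pos hl0 ha.L0
  have hpos' : 0 < a * n - b * m := by exact_mod_cast hpos
  have hone : a * n - b * m = 1 := by
    have hdvd : (a * n - b * m) ∣ 1 := ⟨_, by rw [mul_comm]; exact hdd.symm⟩
    exact Int.eq_one_of_dvd_one hpos'.le hdvd
  refine ⟨?_, hl0, a, b, m, n, hone, ?_, ?_⟩
  · rw [← hdet]; exact_mod_cast hone
  · linarith
  · linarith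

lemma commens {ε x y : ℝ} (h0 : 0 < ε) (h1 : ε < 1) (hx : UU ε x) (hy : UU ε y) (hx1 : x < 1) (hy1 : y < 1) :
    ∃ p q : ℕ, p ≠ 0 ∧ q ≠ 0 ∧ x ^ p = y ^ q := by
  have x0 := hx.1
  have y0 := hy.1
  have hb : ∀ a : ℕ, ∃ b : ℕ, y ^ (b + 1) < x ^ a ∧ x ^ a ≤ y ^ b := fun a =>
    exists_nat_pow_near_of_lt_one (pow_pos x0 a) (pow_le_one₀ x0.le hx1.le) y0 hy1
  choose b hb1 hb2 using hb
  set f : ℕ → ℝ := fun a => x ^ a * (y ^ b a)⁻¹ with hf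
  have fU : ∀ a, UU ε (f a) := fun a => (hx.pow a).mul (hy.pow _).inv
  have f1 : ∀ a, f a ≤ 1 := fun a => by
    simp only [hf]
    rw [← div_eq_mul_inv, div_le_one (pow_pos y0 _)]; exact hb2 a
  have f2 : ∀ a, y < f a := fun a => by
    simp only [hf]
    rw [← div_eq_mul_inv, lt_div_iff₀ (pow_pos y0 _)]
    have := hb1 a
    rw [pow_succ] at this
    linarith
  choose t ht using fun a => (fU a).trace h0 h1
  obtain ⟨B, hB⟩ := exists_nat_gt (1 + y⁻¹)
  have ht1 : ∀ a, t a ∈ Finset.Icc (0 : ℤ) B := by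
    intro a
    have p := (fU a).1
    have q : (f a)⁻¹ < y⁻¹ := inv_strictAnti₀ y0 (f2 a)
    have q' := inv_pos.2 p
    have e := ht a
    have g1 : (0 : ℝ) < t a := by linarith
    have g2 : (t a : ℝ) < B := by linarith [f1 a]
    rw [Finset.mem_Icc]
    constructor
    · have : (0 : ℤ) < t a := by exact_mod_cast g1
      omega
    · have : t a < (B : ℤ) := by exact_mod_cast g2
      omega
  obtain ⟨a, a', hne, haa⟩ : ∃ a a', a < a' ∧ t a = t a' := by
    by_contra hc
    push Not at hc
    have hinj : Function.Injective t := by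
      intro a a' h
      rcases lt_trichotomy a a' with h1 | h1 | h1
      · exact absurd h (hc _ _ h1)
      · exact h1
      · exact absurd h.symm (hc _ _ h1)
    have : (Set.range t).Finite := (Finset.finite_toSet (Finset.Icc (0 : ℤ) B)).subset (by
      rintro _ ⟨a, rfl⟩; exact ht1 a)
    exact (Set.infinite_range_of_injective hinj) this
  have hfe : f a = f a' := by
    have e : f a + (f a)⁻¹ = f a' + (f a')⁻¹ := by rw [ht, ht, haa]
    have p := (fU a).1
    have p' := (fU a').1
    have : (f a - f a') * (f a * f a' - 1) = 0 := by
      field_simp at e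
      linear_combination e
    rcases mul_eq_zero.1 this with h | h
    · linarith
    · have := f1 a
      have := f1 a'
      nlinarith
  have hpow : x ^ a * y ^ b a' = x ^ a' * y ^ b a := by
    simp only [hf] at hfe
    have q1 := (pow_pos y0 (b a)).ne'
    have q2 := (pow_pos y0 (b a')).ne'
    field_simp at hfe
    linarith
  obtain ⟨p, rfl⟩ := Nat.exists_eq_add_of_lt hne
  have hp1 : x ^ (p + 1) < 1 := pow_lt_one₀ x0.le hx1 (by omega)
  have hpow2 : y ^ b (a + p + 1) = x ^ (p + 1) * y ^ b a := by
    apply mul_left_cancel₀ (pow_pos x0 a).ne'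
    rw [hpow]; ring
  have hlt : b a < b (a + p + 1) := by
    by_contra hge
    push Not at hge
    have := pow_le_pow_of_le_one y0.le hy1.le hge
    have := pow_pos y0 (b a)
    nlinarith
  obtain ⟨q, hq⟩ := Nat.exists_eq_add_of_lt hlt
  refine ⟨p + 1, q + 1, by omega, by omega, ?_⟩
  rw [hq] at hpow2
  apply mul_right_cancel₀ (pow_pos y0 (b a)).ne'
  rw [← hpow2]; ring

lemma sturm_data {ε c : ℝ} (hp : Par ε 1 c) {ψ : Fin 2 → List (Fin 2)} (hid : ¬ ∀ a, ψ a = [a])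
    (hfix : IsFixedPointSubst ψ (w2 ε c)) :
    ∃ (k : ℕ → ℕ) (M : ℤ × ℤ →+ ℤ × ℤ) (lam Lam g0 g1 : ℝ), SS (ds ε 1 c) k ∧
      (∀ n, orb ε 1 c (k n) = M (orb ε 1 c n)) ∧ Adm ε lam Lam g0 g1 M ∧ lam * Lam = 1 ∧ UU ε lam := by
  obtain ⟨k, hm, h0, hs, hl'⟩ := hfix
  have hk : SS (ds ε 1 c) k := SS_congr (fix_to_SS hm h0 hs hl') fun n m => by
    rw [ds_e2, ds_e2]; exact e2_inj.eq_iff.symm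
  have hne : ∃ n, k n ≠ n := by
    by_contra hc
    push Not at hc
    apply hid
    intro a
    have : ∃ n, w2 ε c n = a := by
      obtain ⟨n0, hn0⟩ := occ0 hp
      obtain ⟨n2, hn2⟩ := occ2 hp
      rw [ds_e2] at hn0 hn2
      fin_cases a
      · exact ⟨n0, e2_inj (hn0.trans rfl)⟩
      · exact ⟨n2, e2_inj (hn2.trans rfl)⟩
    obtain ⟨n, hn⟩ := this
    have e1 := hs n
    have e2 := hl' n 0
    rw [hc, hc, hn] at e1
    rw [hc, hn, add_zero, hn] at e2
    have hlen : (ψ a).length = 1 := by omega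
    obtain ⟨a', ha'⟩ := List.length_eq_one_iff.1 hlen
    have := e2 (by omega)
    simp [ha'] at this
    rw [ha', ← this]
  obtain ⟨M, lam, hM, hv⟩ := matrix2 hp hk
  obtain ⟨k', M', lam', Lam', g0, g1, hk', hM', ha⟩ := adm_exists hp hk hM hv hne
  obtain ⟨hC, hC'⟩ := extract hp ha hk' hM'
  obtain ⟨u1, u2⟩ := ha.unit hp.e0 hp.e1 hp.irr (invL2 hp ha hC)
  exact ⟨k', M', lam', Lam', g0, g1, hk', hM', ha, u1, u2⟩

lemma combine_left {ε l c lam Lam g0 g1 : ℝ} {M : ℤ × ℤ →+ ℤ × ℤ} (hp : Par ε l c) (hl : l < 1)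
    (ha : Adm ε lam Lam g0 g1 M) (hC : Cnd ε 1 c lam Lam g0 g1 c) : Cnd ε l c lam Lam g0 g1 c := by
  obtain ⟨_, _, _, _, _, _, _, _⟩ := id hp
  have hL0 := ha.L0
  have hp0 := ha.p0
  have hp1 := ha.p1
  have hl0 := ha.l0
  intro y z h1 h2 h3 h4 h5 h6 hA
  rcases lt_or_gt_of_ne h3 with h | h
  · rw [dd, if_pos h, gg10] at h6
    refine hC y z h1 (by linarith) (by intro h; linarith) h4 h5 ?_ hA
    rw [dd1_lt (by linarith), gg10]; exact h6
  rcases lt_or_gt_of_ne h4 with h' | h'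
  · rw [dd, if_neg (by linarith), if_pos h', gg11] at h6
    have hge : Lam * g0 ≤ gg g0 g1 z := by
      by_contra hlt
      push Not at hlt
      refine hC y z h1 (by linarith) (by intro h; linarith) h4 h5 ?_ hA
      rw [dd1_lt (by linarith), gg10]; exact hlt
    have hA' : lam * (y + (1 - ε)) + vl ε (z - M (1, 0)) = c := by
      rw [vl_sub, ha.hv, vl10]; linarith
    have hgz : gg g0 g1 (z - M (1, 0)) = gg g0 g1 z - Lam * g0 := by rw [gg_sub, ha.hg, gg10]
    rcases hge.lt_or_eq with hlt | heq
    · refine hC (y + (1 - ε)) (z - M (1, 0)) (by linarith) (by linarith) (by intro h; linarith)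
        (by intro h; linarith) (by rw [hgz]; linarith) ?_ hA'
      rw [dd1_ge (by linarith), gg01, hgz]; linarith
    · have := ha.inj _ (show gg g0 g1 (z - M (1, 0)) = 0 by rw [hgz]; linarith)
      rw [this, vl_zero] at hA'
      have : 0 < lam * (y + (1 - ε)) := mul_pos hl0 (by linarith)
      linarith
  · rw [dd, if_neg (by linarith), if_neg (by linarith), gg01] at h6
    refine hC y z h1 (by linarith) (by intro h; linarith) h4 h5 ?_ hA
    rw [dd1_ge (by linarith), gg01]; exact h6

lemma combine_right {ε l c lam Lam g0 g1 : ℝ} {M : ℤ × ℤ →+ ℤ × ℤ} (hp : Par ε l c) (hl : l < 1)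
    (ha : Adm ε lam Lam g0 g1 M) (hC : Cnd ε 1 (c + l - 1) lam Lam g0 g1 (c + l - 1 + 1)) :
    Cnd ε l c lam Lam g0 g1 (c + l) := by
  obtain ⟨_, _, _, _, _, _, _, _⟩ := id hp
  have hL0 := ha.L0
  have hp0 := ha.p0
  have hp1 := ha.p1
  have hl0 := ha.l0
  intro y z h1 h2 h3 h4 h5 h6 hA
  have hA2 : lam * y + vl ε z = c + l - 1 + 1 := by linarith
  rcases lt_or_gt_of_ne h3 with h | h
  · rw [dd, if_pos h, gg10] at h6
    refine hC y z (by linarith) (by linarith) (by intro h; linarith) (by intro h; linarith) h5 ?_ hA2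
    rw [dd1_lt (by linarith), gg10]; exact h6
  rcases lt_or_gt_of_ne h4 with h' | h'
  · rw [dd, if_neg (by linarith), if_pos h', gg11] at h6
    have hge : Lam * g1 ≤ gg g0 g1 z := by
      by_contra hlt
      push Not at hlt
      refine hC y z (by linarith) (by linarith) (by intro h; linarith) (by intro h; linarith) h5 ?_ hA2
      rw [dd1_ge (by linarith), gg01]; exact hlt
    have hA' : lam * (y - ε) + vl ε (z - M (0, 1)) = c + l - 1 + 1 := by
      rw [vl_sub, ha.hv, vl01]; linarith
    have hgz : gg g0 g1 (z - M (0, 1)) = gg g0 g1 z - Lam * g1 := by rw [gg_sub, ha.hg, gg01]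
    rcases hge.lt_or_eq with hlt | heq
    · refine hC (y - ε) (z - M (0, 1)) (by linarith) (by linarith) (by intro h; linarith)
        (by intro h; linarith) (by rw [hgz]; linarith) ?_ hA'
      rw [dd1_lt (by linarith), gg10, hgz]; linarith
    · have := ha.inj _ (show gg g0 g1 (z - M (0, 1)) = 0 by rw [hgz]; linarith)
      rw [this, vl_zero] at hA'
      have : lam * (y - ε) < 0 := mul_neg_of_pos_of_neg hl0 (by linarith)
      linarith
  · rw [dd, if_neg (by linarith), if_neg (by linarith), gg01] at h6
    refine hC y z (by linarith) (by linarith) (by intro h; linarith) (by intro h; linarith) h5 ?_ hA2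
    rw [dd1_ge (by linarith), gg01]; exact h6

/-- the open interval coded by a letter -/
lemma letter_int {ε l c : ℝ} (hp : Par ε l c) (hl : l < 1) (b : Fin 3) : ∃ p q : ℝ, p < q ∧ c ≤ p ∧ q ≤ c + l ∧
    ∀ j, p < vl ε (orb ε l c j) → vl ε (orb ε l c j) < q → threeIetWordN ε l c j = b := by
  obtain ⟨_, _, _, _, _, _, _, _⟩ := id hp
  fin_cases b
  · refine ⟨c, c + l - 1 + ε, by linarith, by linarith, by linarith, fun j h1 h2 => ?_⟩
    rcases letter_cases ε l c j with h | h | h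
    · exact h.1
    · linarith [h.2.1]
    · linarith [h.2.1]
  · refine ⟨c + l - 1 + ε, c + ε, by linarith, by linarith, by linarith, fun j h1 h2 => ?_⟩
    rcases letter_cases ε l c j with h | h | h
    · linarith [h.2]
    · exact h.1
    · linarith [h.2.2]
  · refine ⟨c + ε, c + l, by linarith, by linarith, by linarith, fun j h1 h2 => ?_⟩
    rcases letter_cases ε l c j with h | h | h
    · linarith [h.2]
    · linarith [h.2.2]
    · exact h.1

lemma backward {ε l c : ℝ} (hp : Par ε l c) (hl : l < 1)
    {ψ₁ : Fin 2 → List (Fin 2)} (hid₁ : ¬ ∀ a, ψ₁ a = [a]) (hfix₁ : IsFixedPointSubst ψ₁ (w2 ε c))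
    {ψ₂ : Fin 2 → List (Fin 2)} (hid₂ : ¬ ∀ a, ψ₂ a = [a])
    (hfix₂ : IsFixedPointSubst ψ₂ (w2 ε (c + l - 1))) :
    ∃ φ : Fin 3 → List (Fin 3), (∀ a, φ a ≠ []) ∧ IsPrimitiveSubst φ ∧
        IsFixedPointSubst φ (threeIetWordN ε l c) := by
  obtain ⟨k₁, M₁, lam₁, Lam₁, g0, g1, hk₁, hM₁, ha₁, hL₁, hU₁⟩ := sturm_data hp.left hid₁ hfix₁
  obtain ⟨k₂, M₂, lam₂, Lam₂, g0', g1', hk₂, hM₂, ha₂, hL₂, hU₂⟩ := sturm_data hp.right hid₂ hfix₂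
  obtain ⟨p, q, hp0, hq0, hpq⟩ := commens hp.e0 hp.e1 hU₁ hU₂ ha₁.l1 ha₂.l1
  have hN : itM M₁ p = itM M₂ q := hom_unique hp.irr (hv_pow ha₁.hv p) (by rw [hpq]; exact hv_pow ha₂.hv q)
  obtain ⟨k₁', hk₁', hM₁'⟩ := SS_pow hk₁ hM₁ p
  obtain ⟨k₂', hk₂', hM₂'⟩ := SS_pow hk₂ hM₂ q
  rw [← hN] at hM₂'
  have hA := Adm_pow ha₁ hp0
  set N := itM M₁ p
  set lam := lam₁ ^ p
  set Lam := Lam₁ ^ p with hLam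
  have hL1 : 1 < Lam := by
    have : lam * Lam = 1 := by rw [← mul_pow, hL₁, one_pow]
    have h0 := hA.l0
    have h1 := hA.l1
    have h2 := hA.L0
    nlinarith
  -- hitting constants
  choose P Q hPQ hP hQ hlet using letter_int hp hl
  choose K hK using fun b => uniform_hit hp hA.p0 hA.p1 (hPQ b)
  set K' := max (K 0) (max (K 1) (K 2)) with hK'
  have hKK : ∀ b, K b ≤ K' := by
    intro b; fin_cases b <;> simp [hK']
  have hmin : 0 < min g0 g1 := lt_min hA.p0 hA.p1
  obtain ⟨r, hr⟩ := pow_unbounded_of_one_lt (K' / min g0 g1) hL1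
  have hr' : K' / min g0 g1 < Lam ^ (r + 1) := by
    refine hr.trans_le ?_
    exact pow_le_pow_right₀ hL1.le (Nat.le_succ r)
  rw [div_lt_iff₀ hmin] at hr'
  have hR := Adm_pow hA (Nat.succ_ne_zero r)
  obtain ⟨k₁'', hk₁'', hM₁''⟩ := SS_pow hk₁' hM₁' (r + 1)
  obtain ⟨k₂'', hk₂'', hM₂''⟩ := SS_pow hk₂' hM₂' (r + 1)
  have c1 := (extract hp.left hR hk₁'' hM₁'').1
  have c2 := (extract hp.right hR hk₂'' hM₂'').2
  obtain ⟨k, hk, hM⟩ := construct hp hR (combine_left hp hl hR c1) (combine_right hp hl hR c2)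
  have hku : SS (threeIetWordN ε l c) k := SS_congr hk fun n m => by
    rw [ds_e3, ds_e3]; exact e3_inj.eq_iff
  obtain ⟨φ, h1, h2, h3⟩ := SS_to_fix hku
  refine ⟨φ, h1, ⟨1, le_rfl, fun a b => ?_⟩, h3⟩
  have hocc : ∃ n, threeIetWordN ε l c n = a := by
    obtain ⟨n, hn1, hn2⟩ := orb_dense hp (hPQ a) (hP a) (hQ a)
    exact ⟨n, hlet a n hn1 hn2⟩
  obtain ⟨n, hn⟩ := hocc
  have hmem := orb_mem hp n
  have hl0 := hR.l0
  have hl1 := hR.l1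
  have hc0 := hp.c0
  have hcl := hp.cl
  simp only [Nat.succ_eq_add_one] at hl0 hl1
  obtain ⟨z, z1, z2, z3, z4⟩ := hK b (lam ^ (r + 1) * vl ε (orb ε l c n)) ⟨by nlinarith, by nlinarith⟩
  have hvl : vl ε (orb ε l c (k n) + z) = lam ^ (r + 1) * vl ε (orb ε l c n) + vl ε z := by
    rw [vl_add, hM, hR.hv]
  have hmono := gg_orb_mono ε l c hA.p0 hA.p1
  have hg0 : 0 ≤ gg g0 g1 (orb ε l c (k n)) := by
    refine le_trans ?_ (gg_orb_ge ε l c hA.p0 hA.p1 (k n))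
    positivity
  obtain ⟨j, hj⟩ := orb_surj hp hA.p0 hA.p1 (z := orb ε l c (k n) + z)
    (by rw [hvl]; linarith [hP b]) (by rw [hvl]; linarith [hQ b]) (by rw [gg_add]; linarith)
  have hjb : threeIetWordN ε l c j = b := hlet b j (by rw [hj, hvl]; exact z3) (by rw [hj, hvl]; exact z4)
  have hj1 : k n < j := by
    rw [← hmono.lt_iff_lt]
    simp only [hj, gg_add]; linarith
  have hj2 : j < k (n + 1) := by
    rw [← hmono.lt_iff_lt]
    simp only [hj, gg_add]
    rw [hM (n + 1), orb_succ, map_add, gg_add, ← hM, hR.hg (ds ε l c n)]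
    have e1 := gg_dd_ge ε l c hA.p0 hA.p1 (vl ε (orb ε l c n))
    have e2 : Lam ^ (r + 1) * min g0 g1 ≤ Lam ^ (r + 1) * gg g0 g1 (ds ε l c n) :=
      mul_le_mul_of_nonneg_left e1 (by positivity)
    have e3 := hKK b
    simp only [Nat.succ_eq_add_one]
    linarith
  have : (substWord φ)^[1] [a] = φ a := by simp [substWord]
  rw [this, ← hn, h2, List.mem_ofFn]
  exact ⟨⟨j - k n, by omega⟩, by simp only; rw [show k n + (j - k n) = j by omega]; exact hjb⟩

theorem final_aux (ε l c : ℝ)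
    (hε : Irrational ε) (hεm : ε ∈ Set.Ioo (0 : ℝ) 1)
    (hl₁ : max ε (1 - ε) < l) (hl₂ : l < 1) (hc₁ : c ≤ 0) (hc₂ : 0 < c + l)
    (hnd : l ∉ Zbr ε) :
    (∃ φ : Fin 3 → List (Fin 3), (∀ a, φ a ≠ []) ∧ IsPrimitiveSubst φ ∧
        IsFixedPointSubst φ (threeIetWordN ε l c)) ↔
    ((∀ v : ℕ → Fin 2, IsConcatImage sigma01 (threeIetWordN ε l c) v →
        ∃ ψ : Fin 2 → List (Fin 2), (∀ a, ψ a ≠ []) ∧ (¬ ∀ a, ψ a = [a]) ∧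
          IsFixedPointSubst ψ v) ∧
     (∀ v : ℕ → Fin 2, IsConcatImage sigma10 (threeIetWordN ε l c) v →
        ∃ ψ : Fin 2 → List (Fin 2), (∀ a, ψ a ≠ []) ∧ (¬ ∀ a, ψ a = [a]) ∧
          IsFixedPointSubst ψ v)) := by
  have hp : Par ε l c := ⟨hε, hεm.1, hεm.2, (max_lt_iff.1 hl₁).1, (max_lt_iff.1 hl₁).2, hl₂.le, hc₁, hc₂⟩
  constructor
  · rintro ⟨φ, _, hprim, hfix⟩
    obtain ⟨h1, h2⟩ := forward hp hl₂ hnd hprim hfix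
    refine ⟨fun v hv => ?_, fun v hv => ?_⟩
    · rw [(concat01 hp v).1 hv]; exact h1
    · rw [(concat10 hp v).1 hv]; exact h2
  · rintro ⟨h1, h2⟩
    obtain ⟨ψ₁, _, hid₁, hf₁⟩ := h1 _ ((concat01 hp _).2 rfl)
    obtain ⟨ψ₂, _, hid₂, hf₂⟩ := h2 _ ((concat10 hp _).2 rfl)
    exact backward hp hl₂ hid₁ hf₁ hid₂ hf₂


end Helpers

theorem threeIet_subst_invariant_iff_sturmian_images (ε l c : ℝ)
    (hε : Irrational ε) (hεm : ε ∈ Set.Ioo (0 : ℝ) 1)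
    (hl₁ : max ε (1 - ε) < l) (hl₂ : l < 1) (hc₁ : c ≤ 0) (hc₂ : 0 < c + l)
    (hnd : l ∉ Zbr ε) :
    (∃ φ : Fin 3 → List (Fin 3), (∀ a, φ a ≠ []) ∧ IsPrimitiveSubst φ ∧
        IsFixedPointSubst φ (threeIetWordN ε l c)) ↔
    ((∀ v : ℕ → Fin 2, IsConcatImage sigma01 (threeIetWordN ε l c) v →
        ∃ ψ : Fin 2 → List (Fin 2), (∀ a, ψ a ≠ []) ∧ (¬ ∀ a, ψ a = [a]) ∧
          IsFixedPointSubst ψ v) ∧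
     (∀ v : ℕ → Fin 2, IsConcatImage sigma10 (threeIetWordN ε l c) v →
        ∃ ψ : Fin 2 → List (Fin 2), (∀ a, ψ a ≠ []) ∧ (¬ ∀ a, ψ a = [a]) ∧
          IsFixedPointSubst ψ v)) := by
  exact final_aux ε l c hε hεm hl₁ hl₂ hc₁ hc₂ hnd
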